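/- Let q be a braiding matrix with connected Dynkin diagram such that B_q is finite dimensional, and let B be a pre-Nichols algebra of q with finite GKdim. Let i,j,k ∈ I_θ be such that q_{jj} = q_{kk} = q̃_{jk} = −1, q_{ii} = −q̃_{ij} ∈ G_3' and q̃_{ik} = 1. Then [x_{iijk}, x_{ijk}]_c = 0 in B. -/

import Mathlib

/-
Common framework for formalizing statements from
"Finite GK-dimensional pre-Nichols algebras of (super)modular and unidentified type"
(Angiono, Campagnolo, Sanmarco).

We work over `ℂ` (an algebraically closed field of characteristic zero).
A braiding matrix is `q : Fin θ → Fin θ → ℂˣ`.  The tensor algebra `T(V)` of the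
associated braided vector space of diagonal type is realized as the free algebra
on `Fin θ`.  The braided bialgebra structure on `T(V)` (the braided coproduct,
uniquely determined by the braiding matrix) is packaged in the structure
`BraidedStr`: its fields characterize it uniquely, so quantifying over
`S : BraidedStr θ q` is equivalent to using "the" braided coproduct.

A pre-Nichols algebra of `q` is the quotient `T(V)/I` by an ℕ₀-homogeneous
(two-sided) braided bi-ideal `I` generated in degrees ≥ 2 (`IsPreNicholsIdeal`);
such an ideal is automatically contained in the defining ideal `Jq` of the
Nichols algebra, which is the largest such ideal.  A statement
"`x = 0` holds in the pre-Nichols algebra `T(V)/I`" is formalized as `x ∈ I`.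
-/

open scoped TensorProduct

noncomputable section

namespace PreNicholsPaper

/-- The tensor algebra `T(V)` of the braided vector space of diagonal type of rank `θ`. -/
abbrev TV (θ : ℕ) := FreeAlgebra ℂ (Fin θ)

/-- The generator `x_i` of `T(V)`. -/
def gen (θ : ℕ) (i : Fin θ) : TV θ := FreeAlgebra.ι ℂ i

/-- The monomial `x_{i_1} ⋯ x_{i_n}` associated to a word. -/
def wordElem (θ : ℕ) (w : List (Fin θ)) : TV θ := (w.map (gen θ)).prod

/-- The multidegree in `ℕ₀^θ` of a word. -/
def degW (θ : ℕ) (w : List (Fin θ)) : Fin θ → ℕ := fun i => w.count i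

/-- `α_i`, the `i`-th canonical basis vector of `ℕ₀^θ`. -/
def δ (θ : ℕ) (i : Fin θ) : Fin θ → ℕ := fun k => if k = i then 1 else 0

/-- The bilinear form `ℕ₀^θ × ℕ₀^θ → ℂˣ` attached to the braiding matrix,
`q(α_i, α_j) = q_{ij}`, evaluated in `ℂ`. -/
def qf {θ : ℕ} (q : Fin θ → Fin θ → ℂˣ) (a b : Fin θ → ℕ) : ℂ :=
  ∏ i : Fin θ, ∏ j : Fin θ, (q i j : ℂ) ^ (a i * b j)

/-- `q̃_{ij} = q_{ij} q_{ji}`. -/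
def qtil {θ : ℕ} (q : Fin θ → Fin θ → ℂˣ) (i j : Fin θ) : ℂ := (q i j : ℂ) * (q j i : ℂ)

/-- The braided commutator `[u,v]_c = uv - q(a,b) vu` of elements `u, v`
which are homogeneous of multidegrees `a`, `b` respectively. -/
def brk {θ : ℕ} (q : Fin θ → Fin θ → ℂˣ) (a b : Fin θ → ℕ) (u v : TV θ) : TV θ :=
  u * v - qf q a b • (v * u)

/-- `(ad_c x_i) y = x_i y - q(α_i, b) y x_i` for `y` homogeneous of multidegree `b`. -/
def ad1 {θ : ℕ} (q : Fin θ → Fin θ → ℂˣ) (i : Fin θ) (b : Fin θ → ℕ) (y : TV θ) : TV θ :=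
  brk q (δ θ i) b (gen θ i) y

/-- The iterated braided adjoint `x_{i_1 i_2 ⋯ i_k} = (ad_c x_{i_1}) x_{i_2 ⋯ i_k}`. -/
def xw {θ : ℕ} (q : Fin θ → Fin θ → ℂˣ) : List (Fin θ) → TV θ
  | [] => 1
  | [i] => gen θ i
  | i :: w => ad1 q i (degW θ w) (xw q w)

/-- `(ad_c x_i)^m x_j`. -/
def adpow {θ : ℕ} (q : Fin θ → Fin θ → ℂˣ) (i j : Fin θ) : ℕ → TV θ
  | 0 => gen θ j
  | m + 1 => ad1 q i (fun k => m * δ θ i k + δ θ j k) (adpow q i j m)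

/-- The homogeneous component of total degree `n` of `T(V)`. -/
def homogTot (θ : ℕ) (n : ℕ) : Submodule ℂ (TV θ) :=
  Submodule.span ℂ {x | ∃ w : List (Fin θ), w.length = n ∧ x = wordElem θ w}

/-- The homogeneous component of multidegree `d ∈ ℕ₀^θ` of `T(V)`. -/
def homogD (θ : ℕ) (d : Fin θ → ℕ) : Submodule ℂ (TV θ) :=
  Submodule.span ℂ {x | ∃ w : List (Fin θ), degW θ w = d ∧ x = wordElem θ w}

/-- The braided bialgebra structure on `T(V)` determined by the braiding matrix `q`:
the braided coproduct `Δ` together with the multiplication `mulB` of the braided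
tensor product `T(V) ⊗ T(V)`.  These axioms determine `Δ` and `mulB` uniquely. -/
structure BraidedStr (θ : ℕ) (q : Fin θ → Fin θ → ℂˣ) where
  Δ : TV θ →ₗ[ℂ] TensorProduct ℂ (TV θ) (TV θ)
  mulB : TensorProduct ℂ (TV θ) (TV θ) →ₗ[ℂ]
    TensorProduct ℂ (TV θ) (TV θ) →ₗ[ℂ] TensorProduct ℂ (TV θ) (TV θ)
  mulB_spec : ∀ (a d : TV θ) (wb wc : List (Fin θ)),
    mulB (a ⊗ₜ[ℂ] wordElem θ wb) (wordElem θ wc ⊗ₜ[ℂ] d)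
      = qf q (degW θ wb) (degW θ wc) • ((a * wordElem θ wc) ⊗ₜ[ℂ] (wordElem θ wb * d))
  Δ_one : Δ 1 = 1 ⊗ₜ[ℂ] 1
  Δ_gen : ∀ i, Δ (gen θ i) = gen θ i ⊗ₜ[ℂ] 1 + 1 ⊗ₜ[ℂ] gen θ i
  Δ_mul : ∀ u v : TV θ, Δ (u * v) = mulB (Δ u) (Δ v)

variable {θ : ℕ} {q : Fin θ → Fin θ → ℂˣ}

/-- `x` is a primitive element. -/
def IsPrimitiveIn (S : BraidedStr θ q) (x : TV θ) : Prop :=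
  S.Δ x = x ⊗ₜ[ℂ] (1 : TV θ) + (1 : TV θ) ⊗ₜ[ℂ] x

/-- The submodule `I ⊗ T(V) + T(V) ⊗ J` of `T(V) ⊗ T(V)`. -/
def mixedPair (I J : Submodule ℂ (TV θ)) : Submodule ℂ (TensorProduct ℂ (TV θ) (TV θ)) :=
  Submodule.span ℂ
    ({x | ∃ a b : TV θ, a ∈ I ∧ x = a ⊗ₜ[ℂ] b} ∪ {x | ∃ a b : TV θ, b ∈ J ∧ x = a ⊗ₜ[ℂ] b})

/-- The submodule `I ⊗ T(V) + T(V) ⊗ I` of `T(V) ⊗ T(V)`. -/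
def mixedSub (I : Submodule ℂ (TV θ)) : Submodule ℂ (TensorProduct ℂ (TV θ) (TV θ)) :=
  mixedPair I I

/-- `I` is the defining ideal of a pre-Nichols algebra of `q`：an ℕ₀-homogeneous
two-sided (bi-)ideal of `T(V)` generated in degrees `≥ 2` which is also a coideal.
Such an ideal is automatically contained in the defining ideal `Jq` of the Nichols
algebra, and the pre-Nichols algebra is the quotient `T(V)/I`. -/
structure IsPreNicholsIdeal (S : BraidedStr θ q) (I : Submodule ℂ (TV θ)) : Prop where
  mul_left : ∀ a x : TV θ, x ∈ I → a * x ∈ I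
  mul_right : ∀ a x : TV θ, x ∈ I → x * a ∈ I
  homog_ge2 : I = Submodule.span ℂ {x | x ∈ I ∧ ∃ n, 2 ≤ n ∧ x ∈ homogTot θ n}
  coideal : ∀ x ∈ I, S.Δ x ∈ mixedSub I

/-- The defining ideal `J_q` of the Nichols algebra `B_q = T(V)/J_q`:
the maximal homogeneous braided Hopf ideal generated in degrees `≥ 2`. -/
def Jq (S : BraidedStr θ q) : Submodule ℂ (TV θ) := sSup {I | IsPreNicholsIdeal S I}

/-- The standard filtration of `T(V)`: span of words of length `≤ n`. -/
def Wfil (θ : ℕ) (n : ℕ) : Submodule ℂ (TV θ) :=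
  Submodule.span ℂ {x | ∃ w : List (Fin θ), w.length ≤ n ∧ x = wordElem θ w}

/-- The quotient algebra `T(V)/I` has finite Gelfand–Kirillov dimension, i.e.
the standard filtration of the (finitely generated) quotient has polynomial growth. -/
def FinGK (I : Submodule ℂ (TV θ)) : Prop :=
  ∃ C d : ℕ, ∀ n : ℕ, Module.finrank ℂ ((Wfil θ n).map I.mkQ) ≤ C * (n + 1) ^ d

/-- The Gelfand–Kirillov dimension of the quotient algebra `T(V)/I`. -/
def GKdim (I : Submodule ℂ (TV θ)) : ℝ :=
  Filter.limsup
    (fun n : ℕ => Real.log (Module.finrank ℂ ((Wfil θ n).map I.mkQ)) / Real.log n)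
    Filter.atTop

/-- `I` defines an eminent pre-Nichols algebra: it is a finite-GKdim pre-Nichols
algebra, and every finite-GKdim pre-Nichols algebra of `q` is a quotient of it. -/
def IsEminent (S : BraidedStr θ q) (I : Submodule ℂ (TV θ)) : Prop :=
  IsPreNicholsIdeal S I ∧ FinGK I ∧
    ∀ I' : Submodule ℂ (TV θ), IsPreNicholsIdeal S I' → FinGK I' → I ≤ I'

/-- The Dynkin diagram of the braiding matrix `q`: vertices `Fin θ`, an edge between
`i ≠ j` iff `q̃_{ij} ≠ 1`. -/
def dynkin {θ : ℕ} (q : Fin θ → Fin θ → ℂˣ) : SimpleGraph (Fin θ) :=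
  SimpleGraph.fromRel (fun i j => qtil q i j ≠ 1)

/-- The quantum number `(m)_t = 1 + t + ⋯ + t^{m-1}`. -/
def qnum (t : ℂ) (m : ℕ) : ℂ := ∑ k ∈ Finset.range m, t ^ k

/-- The set of `n ∈ ℕ₀` such that `(n+1)_{q_{ii}} (1 - q_{ii}^n q̃_{ij}) = 0`,
i.e. such that `(ad_c x_i)^{n+1} x_j = 0` in the Nichols algebra.  The entry
`c_{ij}` of the generalized Cartan matrix is `-(min of this set)`. -/
def cSet {θ : ℕ} (q : Fin θ → Fin θ → ℂˣ) (i j : Fin θ) : Set ℕ :=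
  {n | qnum (q i i : ℂ) (n + 1) * (1 - (q i i : ℂ) ^ n * qtil q i j) = 0}

/-- The generalized Cartan matrix of `q`. -/
def cij {θ : ℕ} (q : Fin θ → Fin θ → ℂˣ) (i j : Fin θ) : ℤ :=
  if i = j then 2 else -(Int.ofNat (sInf (cSet q i j)))

/-- All entries `c_{ij}` are defined at the vertex `i`. -/
def reflectable {θ : ℕ} (q : Fin θ → Fin θ → ℂˣ) (i : Fin θ) : Prop :=
  ∀ j, j ≠ i → (cSet q i j).Nonempty

/-- The `i`-th reflection of the braiding matrix:
`(r_i q)_{jk} = q(s_i α_j, s_i α_k)` where `s_i α_j = α_j - c_{ij} α_i`. -/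
def reflectMat {θ : ℕ} (q : Fin θ → Fin θ → ℂˣ) (i : Fin θ) : Fin θ → Fin θ → ℂˣ :=
  fun j k =>
    q j k * q j i ^ (-(cij q i k)) * q i k ^ (-(cij q i j)) * q i i ^ (cij q i j * cij q i k)

/-- The reflection `s_i` acting on `ℤ^θ`. -/
def sRefl {θ : ℕ} (q : Fin θ → Fin θ → ℂˣ) (i : Fin θ) (β : Fin θ → ℤ) : Fin θ → ℤ :=
  fun k => β k - (if k = i then ∑ j, cij q i j * β j else 0)

/-- The (real) roots of `q`, together with the base points of the Weyl groupoid at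
which they live: pairs `(q', β)` obtained from a simple root of `q` by iterated
reflections. -/
inductive ReachRoot {θ : ℕ} (q₀ : Fin θ → Fin θ → ℂˣ) :
    (Fin θ → Fin θ → ℂˣ) → (Fin θ → ℤ) → Prop
  | simple (j : Fin θ) : ReachRoot q₀ q₀ (fun k => if k = j then 1 else 0)
  | reflect {q' : Fin θ → Fin θ → ℂˣ} {β : Fin θ → ℤ} (i : Fin θ) :
      ReachRoot q₀ q' β → ReachRoot q₀ (reflectMat q' i) (sRefl q' i β)

/-- `q` has a finite (generalized) root system: all reflections are defined at every
point of the Weyl groupoid, and the set of roots so obtained is finite. -/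
def FiniteRootSystem {θ : ℕ} (q : Fin θ → Fin θ → ℂˣ) : Prop :=
  (∀ q' i, (∃ β, ReachRoot q q' β) → reflectable q' i) ∧
    Set.Finite {β : Fin θ → ℤ | ∃ q', ReachRoot q q' β}

/-- Conjecture (Andruskiewitsch–Angiono–Heckenberger): the root system of a Nichols
algebra of diagonal type with finite Gelfand–Kirillov dimension is finite. -/
def AAH : Prop :=
  ∀ (θ : ℕ) (q : Fin θ → Fin θ → ℂˣ) (S : BraidedStr θ q), FinGK (Jq S) → FiniteRootSystem q

/-- The two-sided ideal of `T(V)` generated by a set. -/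
def idealGen (θ : ℕ) (s : Set (TV θ)) : Submodule ℂ (TV θ) :=
  Submodule.span ℂ {x | ∃ g ∈ s, ∃ a b : TV θ, x = a * g * b}

end PreNicholsPaper

namespace PreNicholsPaper

/-! Let `T(V)/I` be a pre-Nichols algebra of finite GK dimension. A homogeneous primitive element
`p` of degree at least two that survives in `T(V)/I` spans, together with some of the generators,
a braided vector space of diagonal type. The graded algebra of the subalgebra of `T(V)/I` generated
by this space is a pre-Nichols algebra of it, again of finite GK dimension, so by the conjecture of
Andruskiewitsch, Angiono and Heckenberger its braiding matrix has a finite root system. This fails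
when the vertex `p` has label `1` and is not isolated, and for two explicit diagrams of rank three,
as one sees by reflecting.

In this way one kills successively `x_i³`, `x_j²`, `[x_i, x_k]_c`, `[x_j, x_k²]_c`, `x_{jk}²`,
`[x_{iij}, x_{ij}]_c` and finally `[x_{iijk}, x_{ijk}]_c`, each of them being primitive modulo
the previous ones. -/

section Words

variable {θ : ℕ}

@[simp] theorem wordElem_nil : wordElem θ [] = 1 := rfl

@[simp] theorem wordElem_cons (m : Fin θ) (w : List (Fin θ)) :
    wordElem θ (m :: w) = gen θ m * wordElem θ w := rfl

theorem wordElem_append (v w : List (Fin θ)) :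
    wordElem θ (v ++ w) = wordElem θ v * wordElem θ w := by
  simp [wordElem]

theorem wordElem_singleton (m : Fin θ) : wordElem θ [m] = gen θ m := by simp

@[simp] theorem degW_nil : degW θ [] = 0 := by ext; simp [degW]

theorem degW_append (v w : List (Fin θ)) : degW θ (v ++ w) = degW θ v + degW θ w := by
  ext; simp [degW]

@[simp] theorem degW_cons (m : Fin θ) (w : List (Fin θ)) :
    degW θ (m :: w) = δ θ m + degW θ w := by
  ext l
  by_cases h : m = l
  · simp [degW, δ, h, add_comm]
  · simp [degW, δ, h, Ne.symm h]

theorem span_range_wordElem : Submodule.span ℂ (Set.range (wordElem θ)) = ⊤ := by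
  have range_eq : Set.range (wordElem θ) =
      ↑(Submonoid.closure (Set.range (FreeAlgebra.ι ℂ (X := Fin θ)))) := by
    rw [← FreeMonoid.mrange_lift]
    exact congrArg Set.range (funext fun w => (FreeMonoid.lift_apply (FreeAlgebra.ι ℂ) w).symm)
  rw [range_eq, ← Algebra.adjoin_eq_span, FreeAlgebra.adjoin_range_ι, Algebra.top_toSubmodule]

theorem linearMap_ext_word {N : Type*} [AddCommMonoid N] [Module ℂ N] {f g : TV θ →ₗ[ℂ] N}
    (h : ∀ w, f (wordElem θ w) = g (wordElem θ w)) : f = g :=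
  LinearMap.ext_on_range span_range_wordElem h

theorem tensor_ext_word_left {N : Type*} [AddCommMonoid N] [Module ℂ N]
    {f g : TV θ ⊗[ℂ] TV θ →ₗ[ℂ] N}
    (h : ∀ w d, f (wordElem θ w ⊗ₜ d) = g (wordElem θ w ⊗ₜ d)) : f = g :=
  TensorProduct.ext (linearMap_ext_word fun w => LinearMap.ext (h w))

@[elab_as_elim]
theorem gen_mul_induction {P : TV θ → Prop} (one : P 1)
    (gen_mul : ∀ m x, P x → P (gen θ m * x)) (add : ∀ x y, P x → P y → P (x + y))
    (smul : ∀ (c : ℂ) x, P x → P (c • x)) (x : TV θ) : P x := by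
  have word : ∀ w : List (Fin θ), P (wordElem θ w) := fun w => by
    induction w with
    | nil => exact one
    | cons m w ih => exact gen_mul m _ ih
  refine Submodule.span_induction (p := fun x _ => P x) (Set.forall_mem_range.2 word) ?_
    (fun x y _ _ => add x y) (fun c x _ => smul c x)
    (span_range_wordElem.ge (Submodule.mem_top (x := x)))
  simpa using smul 0 1 one

theorem wordElem_mem_homogD (w : List (Fin θ)) : wordElem θ w ∈ homogD θ (degW θ w) :=
  Submodule.subset_span ⟨w, rfl, rfl⟩

theorem wordElem_mem_homogTot (w : List (Fin θ)) : wordElem θ w ∈ homogTot θ w.length :=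
  Submodule.subset_span ⟨w, rfl, rfl⟩

theorem gen_mem_homogD (m : Fin θ) : gen θ m ∈ homogD θ (δ θ m) := by
  simpa using wordElem_mem_homogD [m]

theorem one_mem_homogD : (1 : TV θ) ∈ homogD θ 0 := by
  simpa using wordElem_mem_homogD ([] : List (Fin θ))

theorem mul_mem_span_wordElem {P Q R : List (Fin θ) → Prop} {x y : TV θ}
    (hx : x ∈ Submodule.span ℂ {x | ∃ w, P w ∧ x = wordElem θ w})
    (hy : y ∈ Submodule.span ℂ {x | ∃ w, Q w ∧ x = wordElem θ w})
    (h : ∀ v w, P v → Q w → R (v ++ w)) :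
    x * y ∈ Submodule.span ℂ {x | ∃ w, R w ∧ x = wordElem θ w} := by
  refine SetLike.le_def.1 ?_ (Submodule.mul_mem_mul hx hy)
  rw [Submodule.span_mul_span, Submodule.span_le]
  rintro _ ⟨_, ⟨v, hv, rfl⟩, _, ⟨w, hw, rfl⟩, rfl⟩
  exact Submodule.subset_span ⟨v ++ w, h v w hv hw, (wordElem_append v w).symm⟩

theorem mul_mem_homogD {a b : Fin θ → ℕ} {x y : TV θ} (hx : x ∈ homogD θ a)
    (hy : y ∈ homogD θ b) : x * y ∈ homogD θ (a + b) :=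
  mul_mem_span_wordElem hx hy fun v w hv hw => by rw [degW_append, hv, hw]

theorem mul_mem_homogTot {a b : ℕ} {x y : TV θ} (hx : x ∈ homogTot θ a)
    (hy : y ∈ homogTot θ b) : x * y ∈ homogTot θ (a + b) :=
  mul_mem_span_wordElem hx hy fun v w hv hw => by rw [List.length_append, hv, hw]

theorem length_eq_sum_degW (w : List (Fin θ)) : w.length = ∑ l, degW θ w l := by
  induction w with
  | nil => simp
  | cons m w ih => simp [ih, Finset.sum_add_distrib, δ, add_comm]

theorem homogD_le_homogTot (d : Fin θ → ℕ) : homogD θ d ≤ homogTot θ (∑ l, d l) := by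
  rw [homogD, Submodule.span_le]
  rintro _ ⟨w, rfl, rfl⟩
  rw [← length_eq_sum_degW]
  exact wordElem_mem_homogTot w

variable (q : Fin θ → Fin θ → ℂˣ)

@[simp] theorem qf_add_left (a b c : Fin θ → ℕ) : qf q (a + b) c = qf q a c * qf q b c := by
  simp [qf, add_mul, pow_add, Finset.prod_mul_distrib]

@[simp] theorem qf_add_right (a b c : Fin θ → ℕ) : qf q a (b + c) = qf q a b * qf q a c := by
  simp [qf, mul_add, pow_add, Finset.prod_mul_distrib]

@[simp] theorem qf_zero_left (a : Fin θ → ℕ) : qf q 0 a = 1 := by simp [qf]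

@[simp] theorem qf_zero_right (a : Fin θ → ℕ) : qf q a 0 = 1 := by simp [qf]

theorem qf_ne_zero (a b : Fin θ → ℕ) : qf q a b ≠ 0 :=
  Finset.prod_ne_zero_iff.2 fun l _ => Finset.prod_ne_zero_iff.2 fun m _ =>
    pow_ne_zero _ (q l m).ne_zero

@[simp] theorem qf_δ (l m : Fin θ) : qf q (δ θ l) (δ θ m) = q l m := by
  rw [qf, Finset.prod_eq_single_of_mem l (Finset.mem_univ l) fun b _ hb => by simp [δ, hb],
    Finset.prod_eq_single_of_mem m (Finset.mem_univ m) fun b _ hb => by simp [δ, hb]]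
  simp [δ]

theorem brk_mem_homogD {a b : Fin θ → ℕ} {x y : TV θ} (hx : x ∈ homogD θ a)
    (hy : y ∈ homogD θ b) : brk q a b x y ∈ homogD θ (a + b) :=
  Submodule.sub_mem _ (mul_mem_homogD hx hy)
    (Submodule.smul_mem _ _ (add_comm b a ▸ mul_mem_homogD hy hx))

/-- The braided commutator `[x_v, x_w]_c` of the iterated adjoints attached to two words. -/
def xwBrk (v w : List (Fin θ)) : TV θ := brk q (degW θ v) (degW θ w) (xw q v) (xw q w)

@[simp] theorem xw_singleton (m : Fin θ) : xw q [m] = gen θ m := rfl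

theorem xw_cons (m : Fin θ) {w : List (Fin θ)} (hw : w ≠ []) :
    xw q (m :: w) = xwBrk q [m] w := by
  obtain ⟨l, v, rfl⟩ := List.exists_cons_of_ne_nil hw
  simp [xw, ad1, xwBrk]

theorem xw_mem_homogD (w : List (Fin θ)) : xw q w ∈ homogD θ (degW θ w) := by
  induction w with
  | nil => exact degW_nil (θ := θ) ▸ one_mem_homogD
  | cons m w ih =>
    obtain rfl | hw := eq_or_ne w []
    · simpa using gen_mem_homogD m
    · rw [xw_cons q m hw]
      exact degW_append [m] w ▸ brk_mem_homogD q (by simpa using gen_mem_homogD m) ih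

theorem xwBrk_mem_homogD (v w : List (Fin θ)) : xwBrk q v w ∈ homogD θ (degW θ (v ++ w)) :=
  degW_append v w ▸ brk_mem_homogD q (xw_mem_homogD q v) (xw_mem_homogD q w)

end Words

section Operators

variable {θ : ℕ} (q : Fin θ → Fin θ → ℂˣ)

/-- The automorphism of `T(V)` acting on degree `γ` by `q(α_m, γ)`. -/
def twistL (m : Fin θ) : TV θ →ₐ[ℂ] TV θ :=
  FreeAlgebra.lift ℂ fun l => (q m l : ℂ) • gen θ l

/-- The automorphism of `T(V)` acting on degree `γ` by `q(γ, α_m)`. -/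
def twistR (m : Fin θ) : TV θ →ₐ[ℂ] TV θ :=
  FreeAlgebra.lift ℂ fun l => (q l m : ℂ) • gen θ l

@[simp] theorem twistL_gen (m l : Fin θ) : twistL q m (gen θ l) = (q m l : ℂ) • gen θ l := by
  simp [twistL, gen]

@[simp] theorem twistR_gen (m l : Fin θ) : twistR q m (gen θ l) = (q l m : ℂ) • gen θ l := by
  simp [twistR, gen]

theorem twistL_word (m : Fin θ) (w : List (Fin θ)) :
    twistL q m (wordElem θ w) = qf q (δ θ m) (degW θ w) • wordElem θ w := by
  induction w with
  | nil => simp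
  | cons l w ih => simp [ih, smul_smul, mul_comm]

theorem twistR_word (m : Fin θ) (w : List (Fin θ)) :
    twistR q m (wordElem θ w) = qf q (degW θ w) (δ θ m) • wordElem θ w := by
  induction w with
  | nil => simp
  | cons l w ih => simp [ih, smul_smul, mul_comm]

/-- Left multiplication by `y ⊗ 1` in the braided tensor product `T(V) ⊗ T(V)`. -/
def opLeft (θ : ℕ) : TV θ →ₐ[ℂ] Module.End ℂ (TV θ ⊗[ℂ] TV θ) :=
  (Module.End.rTensorAlgHom ℂ (TV θ) (TV θ)).comp (Algebra.lmul ℂ (TV θ))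

@[simp] theorem opLeft_tmul (y c d : TV θ) : opLeft θ y (c ⊗ₜ d) = (y * c) ⊗ₜ d := rfl

/-- Left multiplication by `1 ⊗ y` in the braided tensor product `T(V) ⊗ T(V)`. -/
def opRight : TV θ →ₐ[ℂ] Module.End ℂ (TV θ ⊗[ℂ] TV θ) :=
  FreeAlgebra.lift ℂ fun m =>
    TensorProduct.map (twistL q m).toLinearMap (LinearMap.mulLeft ℂ (gen θ m))

@[simp] theorem opRight_gen_tmul (m : Fin θ) (c d : TV θ) :
    opRight q (gen θ m) (c ⊗ₜ d) = twistL q m c ⊗ₜ (gen θ m * d) := by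
  simp [opRight, gen]

/-- Left multiplication by `Δ(y)` in the braided tensor product `T(V) ⊗ T(V)`. -/
def opΔ : TV θ →ₐ[ℂ] Module.End ℂ (TV θ ⊗[ℂ] TV θ) :=
  FreeAlgebra.lift ℂ fun m => opLeft θ (gen θ m) + opRight q (gen θ m)

@[simp] theorem opΔ_gen (m : Fin θ) :
    opΔ q (gen θ m) = opLeft θ (gen θ m) + opRight q (gen θ m) := by
  simp [opΔ, gen]

theorem opRight_word_tmul (v w : List (Fin θ)) (d : TV θ) :
    opRight q (wordElem θ v) (wordElem θ w ⊗ₜ d) =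
      qf q (degW θ v) (degW θ w) • (wordElem θ w ⊗ₜ (wordElem θ v * d)) := by
  induction v with
  | nil => simp
  | cons m v ih =>
    simp [ih, twistL_word, TensorProduct.smul_tmul', smul_smul, mul_assoc, mul_comm]

theorem opRight_tmul {a b : Fin θ → ℕ} {y c : TV θ} (hy : y ∈ homogD θ a) (hc : c ∈ homogD θ b)
    (d : TV θ) : opRight q y (c ⊗ₜ d) = qf q a b • (c ⊗ₜ (y * d)) := by
  induction hy using Submodule.span_induction with
  | zero => simp
  | add x y _ _ hx hy => simp [hx, hy, add_mul, TensorProduct.tmul_add]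
  | smul t x _ hx => simp [hx, smul_comm t]
  | mem x hx =>
    obtain ⟨v, rfl, rfl⟩ := hx
    induction hc using Submodule.span_induction with
    | zero => simp
    | add x y _ _ hx hy => simp [hx, hy, TensorProduct.add_tmul]
    | smul t x _ hx => simp [hx, ← TensorProduct.smul_tmul', smul_comm t]
    | mem x hx => obtain ⟨w, rfl, rfl⟩ := hx; exact opRight_word_tmul q v w d

theorem opRight_one_tmul (y d : TV θ) : opRight q y (1 ⊗ₜ d) = 1 ⊗ₜ (y * d) := by
  induction y using gen_mul_induction with
  | one => simp
  | gen_mul m x hx => simp [hx, mul_assoc]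
  | add x y hx hy => simp [hx, hy, add_mul, TensorProduct.tmul_add]
  | smul c x hx => simp [hx]

theorem opRight_gen_mul_opLeft (m : Fin θ) (y : TV θ) :
    opRight q (gen θ m) * opLeft θ y = opLeft θ (twistL q m y) * opRight q (gen θ m) :=
  TensorProduct.ext' fun c d => by simp

theorem opRight_mul_opLeft_gen (y : TV θ) (m : Fin θ) :
    opRight q y * opLeft θ (gen θ m) = opLeft θ (gen θ m) * opRight q (twistR q m y) := by
  induction y using gen_mul_induction with
  | one => simp
  | gen_mul l x hx =>
    rw [map_mul, mul_assoc, hx, ← mul_assoc, opRight_gen_mul_opLeft]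
    simp [mul_assoc]
  | add x y hx hy => simp [hx, hy, add_mul, mul_add]
  | smul c x hx => simp [hx]

theorem opRight_mul_opLeft {a b : Fin θ → ℕ} {x y : TV θ} (hx : x ∈ homogD θ a)
    (hy : y ∈ homogD θ b) :
    opRight q x * opLeft θ y = qf q a b • (opLeft θ y * opRight q x) := by
  apply tensor_ext_word_left
  intro w d
  have hw := wordElem_mem_homogD w
  simp only [Module.End.mul_apply, opLeft_tmul, LinearMap.smul_apply]
  rw [opRight_tmul q hx (mul_mem_homogD hy hw), opRight_tmul q hx hw]
  simp [smul_smul]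

theorem BraidedStr.mulB_Δ_gen {q : Fin θ → Fin θ → ℂˣ} (S : BraidedStr θ q) (m : Fin θ) :
    S.mulB (S.Δ (gen θ m)) = opΔ q (gen θ m) := by
  apply tensor_ext_word_left
  intro w d
  have h1 := S.mulB_spec (gen θ m) d [] w
  have h2 := S.mulB_spec 1 d [m] w
  simp only [wordElem_nil, wordElem_singleton, degW_cons, degW_nil] at h1 h2
  rw [S.Δ_gen, map_add, LinearMap.add_apply, h1, h2]
  simp [twistL_word, TensorProduct.smul_tmul']

theorem BraidedStr.Δ_apply {q : Fin θ → Fin θ → ℂˣ} (S : BraidedStr θ q) (x : TV θ) :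
    S.Δ x = opΔ q x (1 ⊗ₜ 1) := by
  induction x using gen_mul_induction with
  | one => simp [S.Δ_one]
  | gen_mul m x ih => rw [S.Δ_mul, ih, S.mulB_Δ_gen, map_mul, Module.End.mul_apply]
  | add x y hx hy => simp [hx, hy]
  | smul c x hx => simp [hx]

/-- The action of the braided tensor product `T(V) ⊗ T(V)` on itself by left multiplication. -/
def tensorMulB : TV θ ⊗[ℂ] TV θ →ₗ[ℂ] Module.End ℂ (TV θ ⊗[ℂ] TV θ) :=
  TensorProduct.lift ((LinearMap.mul ℂ _).compl₁₂ (opLeft θ).toLinearMap (opRight q).toLinearMap)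

@[simp] theorem tensorMulB_tmul (a b : TV θ) :
    tensorMulB q (a ⊗ₜ b) = opLeft θ a * opRight q b := rfl

theorem tensorMulB_opΔ_gen (m : Fin θ) (z : TV θ ⊗[ℂ] TV θ) :
    tensorMulB q (opΔ q (gen θ m) z) = opΔ q (gen θ m) * tensorMulB q z := by
  induction z with
  | zero => simp
  | add x y hx hy => simp only [map_add, hx, hy, mul_add]
  | tmul a b => simp [add_mul, ← mul_assoc, opRight_gen_mul_opLeft]

theorem tensorMulB_opΔ (u : TV θ) : tensorMulB q (opΔ q u (1 ⊗ₜ 1)) = opΔ q u := by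
  induction u using gen_mul_induction with
  | one => simp
  | gen_mul m x ih => rw [map_mul, Module.End.mul_apply, tensorMulB_opΔ_gen, ih]
  | add x y hx hy => simp [hx, hy]
  | smul c x hx => simp [hx]

/-- The braided bialgebra structure on `T(V)` attached to a braiding matrix. -/
def braidedStr : BraidedStr θ q where
  Δ := LinearMap.applyₗ (1 ⊗ₜ 1) ∘ₗ (opΔ q).toLinearMap
  mulB := tensorMulB q
  mulB_spec a d wb wc := by simp [opRight_word_tmul]
  Δ_one := by simp
  Δ_gen i := by simp
  Δ_mul u v := by simp [tensorMulB_opΔ]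

end Operators

section Stability

variable {θ : ℕ}

theorem mixedPair_le {I J : Submodule ℂ (TV θ)} {P : Submodule ℂ (TV θ ⊗[ℂ] TV θ)}
    (h1 : ∀ a ∈ I, ∀ b, a ⊗ₜ b ∈ P) (h2 : ∀ a, ∀ b ∈ J, a ⊗ₜ b ∈ P) : mixedPair I J ≤ P := by
  rw [mixedPair, Submodule.span_le]
  rintro _ (⟨a, b, ha, rfl⟩ | ⟨a, b, hb, rfl⟩)
  exacts [h1 a ha b, h2 a b hb]

theorem tmul_mem_mixedSub_left {I : Submodule ℂ (TV θ)} {a : TV θ} (ha : a ∈ I) (b : TV θ) :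
    a ⊗ₜ b ∈ mixedSub I :=
  Submodule.subset_span (Or.inl ⟨a, b, ha, rfl⟩)

theorem tmul_mem_mixedSub_right {I : Submodule ℂ (TV θ)} (a : TV θ) {b : TV θ} (hb : b ∈ I) :
    a ⊗ₜ b ∈ mixedSub I :=
  Submodule.subset_span (Or.inr ⟨a, b, hb, rfl⟩)

/-- The algebra map `T(V) → ℂ[ε]` recording the constant term and the coefficient of `x_m`. -/
def coordHom (m : Fin θ) : TV θ →ₐ[ℂ] DualNumber ℂ :=
  FreeAlgebra.lift ℂ fun l => if l = m then DualNumber.eps else 0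

/-- The counit of `T(V)`. -/
def counit : TV θ →ₐ[ℂ] ℂ := FreeAlgebra.lift ℂ fun _ => 0

/-- The coefficient of `x_m` in the basis of words. -/
def coord (m : Fin θ) : TV θ →ₗ[ℂ] ℂ := TrivSqZeroExt.sndHom ℂ ℂ ∘ₗ (coordHom m).toLinearMap

@[simp] theorem counit_gen (l : Fin θ) : counit (gen θ l) = 0 := by simp [counit, gen]

theorem fst_coordHom (m : Fin θ) (x : TV θ) : (coordHom m x).fst = counit x := by
  have : (TrivSqZeroExt.fstHom ℂ ℂ ℂ).comp (coordHom m) = counit := by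
    apply FreeAlgebra.hom_ext
    ext l
    by_cases h : l = m <;> simp [coordHom, counit, h]
  exact DFunLike.congr_fun this x

theorem coord_gen (m l : Fin θ) : coord m (gen θ l) = if l = m then 1 else 0 := by
  by_cases h : l = m <;> simp [coord, coordHom, gen, h]

@[simp] theorem coord_one (m : Fin θ) : coord m (1 : TV θ) = 0 := by simp [coord]

theorem coord_mul (m : Fin θ) (x y : TV θ) :
    coord m (x * y) = counit x * coord m y + coord m x * counit y := by
  simp [coord, TrivSqZeroExt.snd_mul, fst_coordHom, mul_comm]

theorem homogTot_le_ker_coord (m : Fin θ) {n : ℕ} (hn : 2 ≤ n) :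
    homogTot θ n ≤ LinearMap.ker (coord m) := by
  rw [homogTot, Submodule.span_le]
  rintro _ ⟨w, rfl, rfl⟩
  match w, hn with
  | a :: b :: w, _ => simp [coord_mul]

theorem homogTot_le_ker_counit {n : ℕ} (hn : 1 ≤ n) :
    homogTot θ n ≤ LinearMap.ker (counit (θ := θ)).toLinearMap := by
  rw [homogTot, Submodule.span_le]
  rintro _ ⟨w, rfl, rfl⟩
  match w, hn with
  | a :: w, _ => simp

theorem counit_twistL (q : Fin θ → Fin θ → ℂˣ) (m : Fin θ) (x : TV θ) :
    counit (twistL q m x) = counit x := by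
  have : counit.comp (twistL q m) = counit := by
    apply FreeAlgebra.hom_ext
    ext l
    simp [twistL, counit, gen]
  exact DFunLike.congr_fun this x

/-- Contraction of the left tensor factor with a functional. -/
def contrL (f : TV θ →ₗ[ℂ] ℂ) : TV θ ⊗[ℂ] TV θ →ₗ[ℂ] TV θ :=
  (TensorProduct.lid ℂ (TV θ)).toLinearMap ∘ₗ LinearMap.rTensor (TV θ) f

/-- Contraction of the right tensor factor with a functional. -/
def contrR (f : TV θ →ₗ[ℂ] ℂ) : TV θ ⊗[ℂ] TV θ →ₗ[ℂ] TV θ :=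
  (TensorProduct.rid ℂ (TV θ)).toLinearMap ∘ₗ LinearMap.lTensor (TV θ) f

@[simp] theorem contrL_tmul (f : TV θ →ₗ[ℂ] ℂ) (a b : TV θ) : contrL f (a ⊗ₜ b) = f a • b := rfl

@[simp] theorem contrR_tmul (f : TV θ →ₗ[ℂ] ℂ) (a b : TV θ) : contrR f (a ⊗ₜ b) = f b • a := rfl

variable {q : Fin θ → Fin θ → ℂˣ} {S : BraidedStr θ q} {I : Submodule ℂ (TV θ)}

theorem contrL_counit_opΔ_gen (m : Fin θ) (z : TV θ ⊗[ℂ] TV θ) :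
    contrL counit.toLinearMap (opΔ q (gen θ m) z) =
      gen θ m * contrL counit.toLinearMap z := by
  induction z with
  | zero => simp
  | add x y hx hy => simp only [map_add, hx, hy, mul_add]
  | tmul a b => simp [counit_twistL]

theorem contrR_counit_opΔ_gen (m : Fin θ) (z : TV θ ⊗[ℂ] TV θ) :
    contrR counit.toLinearMap (opΔ q (gen θ m) z) =
      gen θ m * contrR counit.toLinearMap z := by
  induction z with
  | zero => simp
  | add x y hx hy => simp only [map_add, hx, hy, mul_add]
  | tmul a b => simp

theorem contrL_counit_Δ (x : TV θ) : contrL counit.toLinearMap (S.Δ x) = x := by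
  rw [S.Δ_apply]
  induction x using gen_mul_induction with
  | one => simp
  | gen_mul m x ih => rw [map_mul, Module.End.mul_apply, contrL_counit_opΔ_gen, ih]
  | add x y hx hy => simp only [map_add, LinearMap.add_apply, hx, hy]
  | smul c x hx => simp only [map_smul, LinearMap.smul_apply, hx]

theorem contrR_counit_Δ (x : TV θ) : contrR counit.toLinearMap (S.Δ x) = x := by
  rw [S.Δ_apply]
  induction x using gen_mul_induction with
  | one => simp
  | gen_mul m x ih => rw [map_mul, Module.End.mul_apply, contrR_counit_opΔ_gen, ih]
  | add x y hx hy => simp only [map_add, LinearMap.add_apply, hx, hy]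
  | smul c x hx => simp only [map_smul, LinearMap.smul_apply, hx]

theorem contrR_coord_Δ_gen_mul (m : Fin θ) (x : TV θ) :
    contrR (coord m) (S.Δ (gen θ m * x)) =
      gen θ m * contrR (coord m) (S.Δ x) + twistL q m x := by
  have key (z : TV θ ⊗[ℂ] TV θ) : contrR (coord m) (opΔ q (gen θ m) z) =
      gen θ m * contrR (coord m) z + twistL q m (contrR counit.toLinearMap z) := by
    induction z with
    | zero => simp
    | add x y hx hy => simp only [map_add, hx, hy, mul_add]; abel
    | tmul a b => simp [coord_mul, coord_gen]
  rw [S.Δ_apply, map_mul, Module.End.mul_apply, ← S.Δ_apply, key, contrR_counit_Δ]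

theorem contrL_coord_Δ_mul_gen (m : Fin θ) (x : TV θ) :
    contrL (coord m) (S.Δ (x * gen θ m)) =
      twistR q m x + contrL (coord m) (S.Δ x) * gen θ m := by
  have key : contrL (coord m) ∘ₗ S.mulB.flip (S.Δ (gen θ m)) =
      (twistR q m).toLinearMap ∘ₗ contrL counit.toLinearMap
        + LinearMap.mulRight ℂ (gen θ m) ∘ₗ contrL (coord m) := by
    refine TensorProduct.ext (LinearMap.ext fun a => linearMap_ext_word fun w => ?_)
    have h1 := S.mulB_spec a 1 w [m]
    have h2 := S.mulB_spec a (gen θ m) w []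
    simp only [wordElem_nil, wordElem_singleton, degW_cons, degW_nil, add_zero] at h1 h2
    simp [S.Δ_gen, h1, h2, twistR_word, coord_mul, coord_gen, smul_smul, mul_comm]
  have h := LinearMap.congr_fun key (S.Δ x)
  simp only [LinearMap.comp_apply, LinearMap.add_apply, contrL_counit_Δ,
    LinearMap.flip_apply] at h
  rw [S.Δ_mul, h]
  rfl

namespace IsPreNicholsIdeal

theorem le_ker_coord (hI : IsPreNicholsIdeal S I) (m : Fin θ) : I ≤ LinearMap.ker (coord m) := by
  rw [hI.homog_ge2, Submodule.span_le]
  rintro x ⟨-, n, hn, hx⟩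
  exact homogTot_le_ker_coord m hn hx

theorem le_ker_counit (hI : IsPreNicholsIdeal S I) :
    I ≤ LinearMap.ker (counit (θ := θ)).toLinearMap := by
  rw [hI.homog_ge2, Submodule.span_le]
  rintro x ⟨-, n, hn, hx⟩
  exact homogTot_le_ker_counit (one_le_two.trans hn) hx

theorem contrL_coord_mem (hI : IsPreNicholsIdeal S I) (m : Fin θ) {x : TV θ} (hx : x ∈ I) :
    contrL (coord m) (S.Δ x) ∈ I := by
  have : mixedSub I ≤ I.comap (contrL (coord m)) := mixedPair_le
    (fun a ha b => by simp [LinearMap.mem_ker.1 (hI.le_ker_coord m ha)])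
    (fun a b hb => by simpa using I.smul_mem _ hb)
  exact this (hI.coideal x hx)

theorem contrR_coord_mem (hI : IsPreNicholsIdeal S I) (m : Fin θ) {x : TV θ} (hx : x ∈ I) :
    contrR (coord m) (S.Δ x) ∈ I := by
  have : mixedSub I ≤ I.comap (contrR (coord m)) := mixedPair_le
    (fun a ha b => by simpa using I.smul_mem _ ha)
    (fun a b hb => by simp [LinearMap.mem_ker.1 (hI.le_ker_coord m hb)])
  exact this (hI.coideal x hx)

theorem twistL_mem (hI : IsPreNicholsIdeal S I) (m : Fin θ) {x : TV θ} (hx : x ∈ I) :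
    twistL q m x ∈ I := by
  have h := I.sub_mem (hI.contrR_coord_mem m (hI.mul_left (gen θ m) x hx))
    (hI.mul_left (gen θ m) _ (hI.contrR_coord_mem m hx))
  rwa [contrR_coord_Δ_gen_mul, add_sub_cancel_left] at h

theorem twistR_mem (hI : IsPreNicholsIdeal S I) (m : Fin θ) {x : TV θ} (hx : x ∈ I) :
    twistR q m x ∈ I := by
  have h := I.sub_mem (hI.contrL_coord_mem m (hI.mul_right (gen θ m) x hx))
    (hI.mul_right (gen θ m) _ (hI.contrL_coord_mem m hx))
  rwa [contrL_coord_Δ_mul_gen, add_sub_cancel_right] at h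

theorem mixedSub_le_comap_opLeft (hI : IsPreNicholsIdeal S I) (y : TV θ) :
    mixedSub I ≤ (mixedSub I).comap (opLeft θ y) :=
  mixedPair_le (fun a ha b => tmul_mem_mixedSub_left (hI.mul_left y a ha) b)
    (fun _ _ hb => tmul_mem_mixedSub_right _ hb)

theorem mixedSub_le_comap_opRight_gen (hI : IsPreNicholsIdeal S I) (m : Fin θ) :
    mixedSub I ≤ (mixedSub I).comap (opRight q (gen θ m)) :=
  mixedPair_le
    (fun a ha b => by simpa using tmul_mem_mixedSub_left (hI.twistL_mem m ha) _)
    (fun a b hb => by simpa using tmul_mem_mixedSub_right _ (hI.mul_left _ _ hb))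

theorem mixedSub_le_comap_opΔ_gen (hI : IsPreNicholsIdeal S I) (m : Fin θ) :
    mixedSub I ≤ (mixedSub I).comap (opΔ q (gen θ m)) := fun z hz => by
  rw [Submodule.mem_comap, opΔ_gen, LinearMap.add_apply]
  exact add_mem (hI.mixedSub_le_comap_opLeft _ hz) (hI.mixedSub_le_comap_opRight_gen m hz)

theorem opLeft_apply_mem (hI : IsPreNicholsIdeal S I) {y : TV θ} (hy : y ∈ I)
    (z : TV θ ⊗[ℂ] TV θ) : opLeft θ y z ∈ mixedSub I := by
  induction z with
  | zero => simp
  | add a b ha hb => rw [map_add]; exact Submodule.add_mem _ ha hb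
  | tmul c d => exact tmul_mem_mixedSub_left (hI.mul_right c y hy) d

theorem opRight_apply_mem (hI : IsPreNicholsIdeal S I) {y : TV θ} (hy : y ∈ I)
    (z : TV θ ⊗[ℂ] TV θ) : opRight q y z ∈ mixedSub I := by
  induction z with
  | zero => simp
  | add a b ha hb => rw [map_add]; exact Submodule.add_mem _ ha hb
  | tmul c d =>
    induction c using gen_mul_induction generalizing y with
    | one =>
      rw [opRight_one_tmul]
      exact tmul_mem_mixedSub_right _ (hI.mul_right _ _ hy)
    | gen_mul m c ih =>
      have h := LinearMap.congr_fun (opRight_mul_opLeft_gen q y m) (c ⊗ₜ d)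
      rw [Module.End.mul_apply, opLeft_tmul, Module.End.mul_apply] at h
      rw [h]
      exact hI.mixedSub_le_comap_opLeft _ (ih (hI.twistR_mem m hy))
    | add c c' hc hc' => simpa [TensorProduct.add_tmul] using add_mem (hc hy) (hc' hy)
    | smul t c hc => simpa [← TensorProduct.smul_tmul'] using Submodule.smul_mem _ t (hc hy)

end IsPreNicholsIdeal

end Stability

section Quotient

/-- The action of `T(V)` induced on the quotient `N ⧸ P` by one on `N` whose generators
preserve `P`. -/
def descend {θ : ℕ} {N : Type*} [AddCommGroup N] [Module ℂ N] (F : TV θ →ₐ[ℂ] Module.End ℂ N)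
    (P : Submodule ℂ N) (h : ∀ m, P ≤ P.comap (F (gen θ m))) :
    TV θ →ₐ[ℂ] Module.End ℂ (N ⧸ P) :=
  FreeAlgebra.lift ℂ fun m => P.mapQ P (F (gen θ m)) (h m)

theorem descend_mkQ {θ : ℕ} {N : Type*} [AddCommGroup N] [Module ℂ N]
    (F : TV θ →ₐ[ℂ] Module.End ℂ N) (P : Submodule ℂ N) (h : ∀ m, P ≤ P.comap (F (gen θ m)))
    (y : TV θ) (z : N) : descend F P h y (P.mkQ z) = P.mkQ (F y z) := by
  induction y using gen_mul_induction generalizing z with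
  | one => simp
  | gen_mul m x ih =>
    rw [map_mul, Module.End.mul_apply, ih]
    simp [descend, gen]
  | add x y hx hy => simp only [map_add, LinearMap.add_apply, hx, hy]
  | smul c x hx => simp only [map_smul, LinearMap.smul_apply, hx]

namespace IsPreNicholsIdeal

variable {θ : ℕ} {q : Fin θ → Fin θ → ℂˣ} {S : BraidedStr θ q} {I : Submodule ℂ (TV θ)}

/-- Left multiplication by `y ⊗ 1` in the braided tensor square of `T(V)/I`, realized as
`(T(V) ⊗ T(V)) / (I ⊗ T(V) + T(V) ⊗ I)`. -/
def quotLeft (hI : IsPreNicholsIdeal S I) :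
    TV θ →ₐ[ℂ] Module.End ℂ ((TV θ ⊗[ℂ] TV θ) ⧸ mixedSub I) :=
  descend (opLeft θ) (mixedSub I) fun m => hI.mixedSub_le_comap_opLeft (gen θ m)

/-- Left multiplication by `1 ⊗ y` in the braided tensor square of `T(V)/I`. -/
def quotRight (hI : IsPreNicholsIdeal S I) :
    TV θ →ₐ[ℂ] Module.End ℂ ((TV θ ⊗[ℂ] TV θ) ⧸ mixedSub I) :=
  descend (opRight q) (mixedSub I) hI.mixedSub_le_comap_opRight_gen

/-- Left multiplication by `Δ(y)` in the braided tensor square of `T(V)/I`. -/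
def quotΔ (hI : IsPreNicholsIdeal S I) :
    TV θ →ₐ[ℂ] Module.End ℂ ((TV θ ⊗[ℂ] TV θ) ⧸ mixedSub I) :=
  descend (opΔ q) (mixedSub I) hI.mixedSub_le_comap_opΔ_gen

theorem quotLeft_mkQ (hI : IsPreNicholsIdeal S I) (y : TV θ) (z : TV θ ⊗[ℂ] TV θ) :
    hI.quotLeft y ((mixedSub I).mkQ z) = (mixedSub I).mkQ (opLeft θ y z) :=
  descend_mkQ _ _ _ _ _

theorem quotRight_mkQ (hI : IsPreNicholsIdeal S I) (y : TV θ) (z : TV θ ⊗[ℂ] TV θ) :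
    hI.quotRight y ((mixedSub I).mkQ z) = (mixedSub I).mkQ (opRight q y z) :=
  descend_mkQ _ _ _ _ _

theorem quotΔ_mkQ (hI : IsPreNicholsIdeal S I) (y : TV θ) (z : TV θ ⊗[ℂ] TV θ) :
    hI.quotΔ y ((mixedSub I).mkQ z) = (mixedSub I).mkQ (opΔ q y z) :=
  descend_mkQ _ _ _ _ _

theorem quotLeft_eq_zero (hI : IsPreNicholsIdeal S I) {y : TV θ} (hy : y ∈ I) :
    hI.quotLeft y = 0 :=
  Submodule.linearMap_qext _ <| LinearMap.ext fun z =>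
    (hI.quotLeft_mkQ y z).trans <|
      (Submodule.Quotient.mk_eq_zero _).2 (hI.opLeft_apply_mem hy z)

theorem quotRight_eq_zero (hI : IsPreNicholsIdeal S I) {y : TV θ} (hy : y ∈ I) :
    hI.quotRight y = 0 :=
  Submodule.linearMap_qext _ <| LinearMap.ext fun z =>
    (hI.quotRight_mkQ y z).trans <|
      (Submodule.Quotient.mk_eq_zero _).2 (hI.opRight_apply_mem hy z)

theorem quotRight_mul_quotLeft (hI : IsPreNicholsIdeal S I) {a b : Fin θ → ℕ} {x y : TV θ}
    (hx : x ∈ homogD θ a) (hy : y ∈ homogD θ b) :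
    hI.quotRight x * hI.quotLeft y = qf q a b • (hI.quotLeft y * hI.quotRight x) := by
  refine Submodule.linearMap_qext _ <| LinearMap.ext fun z => ?_
  have h := LinearMap.congr_fun (opRight_mul_opLeft q hx hy) z
  simp only [LinearMap.comp_apply, Module.End.mul_apply, LinearMap.smul_apply] at h ⊢
  rw [hI.quotLeft_mkQ, hI.quotRight_mkQ, hI.quotRight_mkQ, hI.quotLeft_mkQ, h, map_smul]

/-- `y` is primitive in the pre-Nichols algebra `T(V)/I`, expressed as an identity between left
multiplication operators of the braided tensor square. -/
def Prim (hI : IsPreNicholsIdeal S I) (y : TV θ) : Prop :=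
  hI.quotΔ y = hI.quotLeft y + hI.quotRight y

theorem prim_gen (hI : IsPreNicholsIdeal S I) (m : Fin θ) : hI.Prim (gen θ m) := by
  refine Submodule.linearMap_qext _ <| LinearMap.ext fun z => ?_
  simp only [LinearMap.comp_apply, LinearMap.add_apply]
  rw [hI.quotΔ_mkQ, hI.quotLeft_mkQ, hI.quotRight_mkQ, opΔ_gen, LinearMap.add_apply, map_add]

end IsPreNicholsIdeal

end Quotient

section LinearAlgebra

theorem exists_comp_eq_of_ker_le {K V W U : Type*} [DivisionRing K] [AddCommGroup V] [Module K V]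
    [AddCommGroup W] [Module K W] [AddCommGroup U] [Module K U] (f : V →ₗ[K] W) (g : V →ₗ[K] U)
    (h : LinearMap.ker f ≤ LinearMap.ker g) : ∃ k : W →ₗ[K] U, k ∘ₗ f = g := by
  obtain ⟨k, hk⟩ := LinearMap.exists_extend
    ((LinearMap.ker f).liftQ g h ∘ₗ f.quotKerEquivRange.symm.toLinearMap)
  refine ⟨k, LinearMap.ext fun x => ?_⟩
  have hx := LinearMap.congr_fun hk (f.quotKerEquivRange (Submodule.Quotient.mk x))
  simp only [LinearMap.comp_apply, LinearEquiv.coe_coe, LinearEquiv.symm_apply_apply] at hx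
  exact hx

theorem ker_map_mkQ_le_mixedSub {θ : ℕ} (K : Submodule ℂ (TV θ)) :
    LinearMap.ker (TensorProduct.map K.mkQ K.mkQ) ≤ mixedSub K := by
  rw [TensorProduct.map_ker (LinearMap.exact_subtype_mkQ K) K.mkQ_surjective
    (LinearMap.exact_subtype_mkQ K) K.mkQ_surjective]
  refine sup_le ?_ ?_
  · rintro _ ⟨t, rfl⟩
    induction t with
    | zero => simp
    | add a b ha hb => rw [map_add]; exact Submodule.add_mem _ ha hb
    | tmul a b => exact tmul_mem_mixedSub_right a b.2
  · rintro _ ⟨t, rfl⟩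
    induction t with
    | zero => simp
    | add a b ha hb => rw [map_add]; exact Submodule.add_mem _ ha hb
    | tmul a b => exact tmul_mem_mixedSub_left a.2 b

end LinearAlgebra

section Filtration

variable {r : ℕ}

/-- The span of the words of length `< n`. -/
def lowerDeg (r n : ℕ) : Submodule ℂ (TV r) :=
  Submodule.span ℂ {x | ∃ w : List (Fin r), w.length < n ∧ x = wordElem r w}

/-- The component of total degree `n` of `T(V) ⊗ T(V)`. -/
def tensorDeg (r n : ℕ) : Submodule ℂ (TV r ⊗[ℂ] TV r) :=
  Submodule.span ℂ {z | ∃ v w : List (Fin r), v.length + w.length = n ∧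
    z = wordElem r v ⊗ₜ wordElem r w}

theorem gen_mem_homogTot (a : Fin r) : gen r a ∈ homogTot r 1 := by
  simpa using wordElem_mem_homogTot [a]

theorem homogTot_zero : homogTot r 0 = Submodule.span ℂ {1} := by
  simp [homogTot, List.length_eq_zero_iff]

theorem homogTot_one_le : homogTot r 1 ≤ Submodule.span ℂ (Set.range (gen r)) := by
  refine Submodule.span_mono ?_
  rintro _ ⟨w, hw, rfl⟩
  obtain ⟨a, rfl⟩ := List.length_eq_one_iff.1 hw
  exact ⟨a, by simp⟩

theorem lowerDeg_zero : lowerDeg r 0 = ⊥ := by simp [lowerDeg]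

theorem lowerDeg_one : lowerDeg r 1 = homogTot r 0 := by simp [lowerDeg, homogTot]

theorem gen_mul_mem_lowerDeg (a : Fin r) {n : ℕ} {x : TV r} (hx : x ∈ lowerDeg r n) :
    gen r a * x ∈ lowerDeg r (n + 1) :=
  mul_mem_span_wordElem (gen_mem_homogTot a) hx fun v w hv hw => by
    rw [List.length_append]; omega

theorem mul_gen_mem_lowerDeg (a : Fin r) {n : ℕ} {x : TV r} (hx : x ∈ lowerDeg r n) :
    x * gen r a ∈ lowerDeg r (n + 1) :=
  mul_mem_span_wordElem hx (gen_mem_homogTot a) fun v w hv hw => by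
    rw [List.length_append]; omega

theorem opΔ_gen_mem_tensorDeg (q : Fin r → Fin r → ℂˣ) (a : Fin r) {n : ℕ}
    {z : TV r ⊗[ℂ] TV r} (hz : z ∈ tensorDeg r n) : opΔ q (gen r a) z ∈ tensorDeg r (n + 1) := by
  refine (Submodule.span_le (p := (tensorDeg r (n + 1)).comap (opΔ q (gen r a)))).2 ?_ hz
  rintro _ ⟨v, w, rfl, rfl⟩
  rw [SetLike.mem_coe, Submodule.mem_comap, opΔ_gen, LinearMap.add_apply, opLeft_tmul,
    opRight_gen_tmul, twistL_word, ← TensorProduct.smul_tmul', ← wordElem_cons, ← wordElem_cons]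
  exact add_mem
    (Submodule.subset_span ⟨a :: v, w, by rw [List.length_cons]; omega, rfl⟩)
    (Submodule.smul_mem _ _
      (Submodule.subset_span ⟨v, a :: w, by rw [List.length_cons]; omega, rfl⟩))

theorem Δ_mem_tensorDeg {q : Fin r → Fin r → ℂˣ} (S : BraidedStr r q) {n : ℕ} {x : TV r}
    (hx : x ∈ homogTot r n) : S.Δ x ∈ tensorDeg r n := by
  refine (Submodule.span_le (p := (tensorDeg r n).comap S.Δ)).2 ?_ hx
  rintro _ ⟨w, rfl, rfl⟩
  rw [SetLike.mem_coe, Submodule.mem_comap, S.Δ_apply]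
  clear hx
  induction w with
  | nil => exact Submodule.subset_span ⟨[], [], rfl, by simp⟩
  | cons a w ih =>
    rw [wordElem_cons, map_mul, Module.End.mul_apply]
    exact opΔ_gen_mem_tensorDeg q a ih

instance (n : ℕ) : Module.Finite ℂ (Wfil r n) :=
  Module.Finite.iff_fg.2 (Submodule.fg_span (((List.finite_length_le (Fin r) n).image
    (wordElem r)).subset fun _ ⟨w, hw, hx⟩ => ⟨w, hw, hx.symm⟩))

theorem homogTot_le_Wfil {m n : ℕ} (h : m ≤ n) : homogTot r m ≤ Wfil r n :=
  Submodule.span_mono fun _ ⟨w, hw, hx⟩ => ⟨w, hw ▸ h, hx⟩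

theorem mul_mem_Wfil {m n : ℕ} {x y : TV r} (hx : x ∈ Wfil r m) (hy : y ∈ Wfil r n) :
    x * y ∈ Wfil r (m + n) :=
  mul_mem_span_wordElem hx hy fun v w hv hw => by rw [List.length_append]; omega

instance (n : ℕ) : Module.Finite ℂ (homogTot r n) :=
  Submodule.finiteDimensional_of_le (homogTot_le_Wfil le_rfl)

theorem Wfil_zero : Wfil r 0 = homogTot r 0 := by simp [Wfil, homogTot]

theorem Wfil_succ_le_sup (n : ℕ) : Wfil r (n + 1) ≤ Wfil r n ⊔ homogTot r (n + 1) := by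
  rw [Wfil, Submodule.span_le]
  rintro _ ⟨w, hw, rfl⟩
  obtain h | h := hw.lt_or_eq
  · exact Submodule.mem_sup_left (Submodule.subset_span ⟨w, Nat.lt_succ_iff.1 h, rfl⟩)
  · exact Submodule.mem_sup_right (Submodule.subset_span ⟨w, h, rfl⟩)

theorem finrank_map_Wfil_le {U : Type*} [AddCommGroup U] [Module ℂ U] (f : TV r →ₗ[ℂ] U) (n : ℕ)
    (B : ℕ) (hB : ∀ m ≤ n, Module.finrank ℂ ((homogTot r m).map f) ≤ B) :
    Module.finrank ℂ ((Wfil r n).map f) ≤ (n + 1) * B := by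
  induction n with
  | zero =>
    rw [zero_add, one_mul, Wfil_zero]
    exact hB 0 le_rfl
  | succ n ih =>
    calc _ ≤ Module.finrank ℂ ↥((Wfil r n).map f ⊔ (homogTot r (n + 1)).map f) := by
          rw [← Submodule.map_sup]
          exact Submodule.finrank_mono (Submodule.map_mono (Wfil_succ_le_sup n))
      _ ≤ _ := Submodule.finrank_add_le_finrank_add_finrank _ _
      _ ≤ (n + 1) * B + B := add_le_add (ih fun m hm => hB m (by omega)) (hB _ le_rfl)
      _ = _ := by ring

theorem FinGK.mono {I K : Submodule ℂ (TV r)} (h : I ≤ K) (hI : FinGK I) : FinGK K := by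
  obtain ⟨C, d, hC⟩ := hI
  refine ⟨C, d, fun n => le_trans ?_ (hC n)⟩
  rw [← Submodule.factor_comp_mk h, Submodule.map_comp]
  exact Submodule.finrank_map_le _ _

end Filtration

section Family

variable {θ r : ℕ}

/-- The algebra map from the tensor algebra of rank `r` to `T(V)` sending the generators to the
elements `p a`. -/
def famHom (p : Fin r → TV θ) : TV r →ₐ[ℂ] TV θ := FreeAlgebra.lift ℂ p

/-- The tensor square of `famHom p`. -/
def famHomTensor (p : Fin r → TV θ) : TV r ⊗[ℂ] TV r →ₗ[ℂ] TV θ ⊗[ℂ] TV θ :=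
  TensorProduct.map (famHom p).toLinearMap (famHom p).toLinearMap

@[simp] theorem famHom_gen (p : Fin r → TV θ) (a : Fin r) : famHom p (gen r a) = p a := by
  simp [famHom, gen]

@[simp] theorem famHomTensor_tmul (p : Fin r → TV θ) (x y : TV r) :
    famHomTensor p (x ⊗ₜ y) = famHom p x ⊗ₜ famHom p y := rfl

theorem famHom_mem_Wfil {p : Fin r → TV θ} {L : ℕ} (hp : ∀ a, p a ∈ Wfil θ L) {m : ℕ} {x : TV r}
    (hx : x ∈ homogTot r m) : famHom p x ∈ Wfil θ (L * m) := by
  refine (Submodule.span_le (p := (Wfil θ (L * m)).comap (famHom p).toLinearMap)).2 ?_ hx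
  rintro _ ⟨w, rfl, rfl⟩
  rw [SetLike.mem_coe, Submodule.mem_comap, AlgHom.toLinearMap_apply]
  clear hx
  induction w with
  | nil => exact Submodule.subset_span ⟨[], le_rfl, by simp⟩
  | cons a w ih =>
    rw [wordElem_cons, map_mul, famHom_gen, List.length_cons, mul_add_one, add_comm]
    exact mul_mem_Wfil (hp a) ih

/-- The braiding matrix of a family of homogeneous elements of degrees `β a`. -/
def famMat (q : Fin θ → Fin θ → ℂˣ) (β : Fin r → Fin θ → ℕ) (a b : Fin r) : ℂˣ :=
  Units.mk0 (qf q (β a) (β b)) (qf_ne_zero q _ _)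

variable {q : Fin θ → Fin θ → ℂˣ} {S : BraidedStr θ q} {I : Submodule ℂ (TV θ)}

theorem opRight_famHom_tmul {p : Fin r → TV θ} {β : Fin r → Fin θ → ℕ}
    (hp : ∀ a, p a ∈ homogD θ (β a)) (a : Fin r) (c : TV r) (d : TV θ) :
    opRight q (p a) (famHom p c ⊗ₜ d) =
      famHom p (twistL (famMat q β) a c) ⊗ₜ (p a * d) := by
  induction c using gen_mul_induction with
  | one => simp [opRight_one_tmul]
  | gen_mul b c ih =>
    have h := LinearMap.congr_fun (opRight_mul_opLeft q (hp a) (hp b)) (famHom p c ⊗ₜ d)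
    simp only [Module.End.mul_apply, opLeft_tmul, LinearMap.smul_apply, ih] at h
    simpa [famMat, TensorProduct.smul_tmul'] using h
  | add x y hx hy => simp only [map_add, TensorProduct.add_tmul, hx, hy]
  | smul t x hx => simp only [map_smul, ← TensorProduct.smul_tmul', hx]

/-- The elements `p a` of degrees `β a` are primitive in the pre-Nichols algebra `T(V)/I`, and
together with `1` they are linearly independent there. -/
structure PrimitiveFamily (hI : IsPreNicholsIdeal S I) (p : Fin r → TV θ)
    (β : Fin r → Fin θ → ℕ) : Prop where
  mem_homogD : ∀ a, p a ∈ homogD θ (β a)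
  prim : ∀ a, hI.Prim (p a)
  linearIndependent : LinearIndependent ℂ fun a : Option (Fin r) => I.mkQ (a.elim 1 p)

namespace PrimitiveFamily

variable {hI : IsPreNicholsIdeal S I} {p : Fin r → TV θ} {β : Fin r → Fin θ → ℕ}

theorem eq_zero_of_add_sum_mem (hp : PrimitiveFamily hI p β) {c₀ : ℂ} {c : Fin r → ℂ}
    (h : c₀ • 1 + ∑ a, c a • p a ∈ I) : c₀ = 0 ∧ ∀ a, c a = 0 := by
  have hc := Fintype.linearIndependent_iff.1 hp.linearIndependent (fun a => a.elim c₀ c) (by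
    have := (Submodule.Quotient.mk_eq_zero I).2 h
    simpa [Fintype.sum_option, ← Submodule.mkQ_apply] using this)
  exact ⟨hc none, fun a => hc (some a)⟩

theorem mkQ_famHomTensor_opΔ_gen (hp : PrimitiveFamily hI p β) (a : Fin r)
    (z : TV r ⊗[ℂ] TV r) :
    (mixedSub I).mkQ (famHomTensor p (opΔ (famMat q β) (gen r a) z)) =
      hI.quotΔ (p a) ((mixedSub I).mkQ (famHomTensor p z)) := by
  rw [hp.prim a, LinearMap.add_apply, hI.quotLeft_mkQ, hI.quotRight_mkQ, ← map_add]
  congr 1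
  induction z with
  | zero => simp
  | add x y hx hy => simp only [map_add, hx, hy]; abel
  | tmul c d => simp [opRight_famHom_tmul hp.mem_homogD]

theorem mkQ_famHomTensor_Δ (hp : PrimitiveFamily hI p β) (S' : BraidedStr r (famMat q β))
    (x : TV r) :
    (mixedSub I).mkQ (famHomTensor p (S'.Δ x)) = (mixedSub I).mkQ (S.Δ (famHom p x)) := by
  rw [S'.Δ_apply, S.Δ_apply, ← hI.quotΔ_mkQ]
  induction x using gen_mul_induction with
  | one => simp
  | gen_mul a x ih =>
    rw [map_mul, Module.End.mul_apply, hp.mkQ_famHomTensor_opΔ_gen, ih, map_mul, map_mul,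
      Module.End.mul_apply, famHom_gen]
  | add x y hx hy => simp only [map_add, LinearMap.add_apply, hx, hy]
  | smul t x hx => simp only [map_smul, LinearMap.smul_apply, hx]

end PrimitiveFamily

end Family

section GradedKernel

variable {θ r : ℕ} {q : Fin θ → Fin θ → ℂˣ} {S : BraidedStr θ q} {I : Submodule ℂ (TV θ)}
  {hI : IsPreNicholsIdeal S I} {p : Fin r → TV θ} {β : Fin r → Fin θ → ℕ}

/-- The span of `I` and of the products of fewer than `n` of the elements `p a`: the preimage in
`T(V)` of a step of the filtration of the subalgebra of `T(V)/I` they generate. -/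
def filtStep (I : Submodule ℂ (TV θ)) (p : Fin r → TV θ) (n : ℕ) : Submodule ℂ (TV θ) :=
  I ⊔ (lowerDeg r n).map (famHom p).toLinearMap

/-- The kernel of the map from the tensor algebra of rank `r` to the graded algebra attached to the
filtration of the subalgebra of `T(V)/I` generated by the `p a`. -/
def gradedKer (I : Submodule ℂ (TV θ)) (p : Fin r → TV θ) : Submodule ℂ (TV r) :=
  Submodule.span ℂ {x | ∃ n, 2 ≤ n ∧ x ∈ homogTot r n ∧ famHom p x ∈ filtStep I p n}

theorem famHom_gen_mul_mem_filtStep (hI : IsPreNicholsIdeal S I) (a : Fin r) {n : ℕ} {x : TV r}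
    (hx : famHom p x ∈ filtStep I p n) : famHom p (gen r a * x) ∈ filtStep I p (n + 1) := by
  obtain ⟨y, hy, _, ⟨u, hu, rfl⟩, h⟩ := Submodule.mem_sup.1 hx
  rw [map_mul, ← h, mul_add]
  exact Submodule.add_mem_sup (hI.mul_left _ _ hy) ⟨_, gen_mul_mem_lowerDeg a hu, by simp⟩

theorem famHom_mul_gen_mem_filtStep (hI : IsPreNicholsIdeal S I) (a : Fin r) {n : ℕ} {x : TV r}
    (hx : famHom p x ∈ filtStep I p n) : famHom p (x * gen r a) ∈ filtStep I p (n + 1) := by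
  obtain ⟨y, hy, _, ⟨u, hu, rfl⟩, h⟩ := Submodule.mem_sup.1 hx
  rw [map_mul, ← h, add_mul]
  exact Submodule.add_mem_sup (hI.mul_right _ _ hy) ⟨_, mul_gen_mem_lowerDeg a hu, by simp⟩

theorem gen_mul_mem_gradedKer (hI : IsPreNicholsIdeal S I) (a : Fin r) {x : TV r}
    (hx : x ∈ gradedKer I p) : gen r a * x ∈ gradedKer I p := by
  refine (Submodule.span_le
    (p := (gradedKer I p).comap (LinearMap.mulLeft ℂ (gen r a)))).2 ?_ hx
  rintro x ⟨n, hn, hx, hφ⟩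
  exact Submodule.subset_span ⟨n + 1, by omega,
    add_comm 1 n ▸ mul_mem_homogTot (gen_mem_homogTot a) hx,
    famHom_gen_mul_mem_filtStep hI a hφ⟩

theorem mul_gen_mem_gradedKer (hI : IsPreNicholsIdeal S I) (a : Fin r) {x : TV r}
    (hx : x ∈ gradedKer I p) : x * gen r a ∈ gradedKer I p := by
  refine (Submodule.span_le
    (p := (gradedKer I p).comap (LinearMap.mulRight ℂ (gen r a)))).2 ?_ hx
  rintro x ⟨n, hn, hx, hφ⟩
  exact Submodule.subset_span ⟨n + 1, by omega, mul_mem_homogTot hx (gen_mem_homogTot a),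
    famHom_mul_gen_mem_filtStep hI a hφ⟩

theorem mul_mem_gradedKer_right (hI : IsPreNicholsIdeal S I) (a : TV r) {x : TV r}
    (hx : x ∈ gradedKer I p) : a * x ∈ gradedKer I p := by
  induction a using gen_mul_induction with
  | one => rwa [one_mul]
  | gen_mul m a ih => rw [mul_assoc]; exact gen_mul_mem_gradedKer hI m ih
  | add a b ha hb => rw [add_mul]; exact add_mem ha hb
  | smul t a ha => rw [smul_mul_assoc]; exact Submodule.smul_mem _ t ha

theorem mul_mem_gradedKer_left (hI : IsPreNicholsIdeal S I) (a : TV r) {x : TV r}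
    (hx : x ∈ gradedKer I p) : x * a ∈ gradedKer I p := by
  induction a using gen_mul_induction generalizing x with
  | one => rwa [mul_one]
  | gen_mul m a ih => rw [← mul_assoc]; exact ih (mul_gen_mem_gradedKer hI m hx)
  | add a b ha hb => rw [mul_add]; exact add_mem (ha hx) (hb hx)
  | smul t a ha => rw [mul_smul_comm]; exact Submodule.smul_mem _ t (ha hx)

namespace PrimitiveFamily

theorem eq_zero_of_mem_homogTot_zero (hp : PrimitiveFamily hI p β) {x : TV r}
    (hx : x ∈ homogTot r 0) (hφ : famHom p x ∈ filtStep I p 0) : x = 0 := by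
  rw [homogTot_zero] at hx
  obtain ⟨c, rfl⟩ := Submodule.mem_span_singleton.1 hx
  rw [filtStep, lowerDeg_zero, Submodule.map_bot, sup_bot_eq] at hφ
  rw [(hp.eq_zero_of_add_sum_mem (c₀ := c) (c := 0) (by simpa using hφ)).1, zero_smul]

theorem eq_zero_of_mem_homogTot_one (hp : PrimitiveFamily hI p β) {x : TV r}
    (hx : x ∈ homogTot r 1) (hφ : famHom p x ∈ filtStep I p 1) : x = 0 := by
  obtain ⟨c, rfl⟩ := (Submodule.mem_span_range_iff_exists_fun ℂ).1 (homogTot_one_le hx)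
  obtain ⟨y, hy, _, ⟨u, hu, rfl⟩, h⟩ := Submodule.mem_sup.1 hφ
  rw [lowerDeg_one, homogTot_zero] at hu
  obtain ⟨c₀, rfl⟩ := Submodule.mem_span_singleton.1 hu
  have hmem : (-c₀) • (1 : TV θ) + ∑ a, c a • p a ∈ I := by
    have : ∑ a, c a • p a = y + c₀ • 1 := by simpa using h.symm
    rwa [this, neg_smul, neg_add_cancel_comm_assoc]
  simp [(hp.eq_zero_of_add_sum_mem hmem).2]

theorem mem_gradedKer (hp : PrimitiveFamily hI p β) {n : ℕ} {x : TV r} (hx : x ∈ homogTot r n)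
    (hφ : famHom p x ∈ filtStep I p n) : x ∈ gradedKer I p :=
  match n with
  | 0 => hp.eq_zero_of_mem_homogTot_zero hx hφ ▸ zero_mem _
  | 1 => hp.eq_zero_of_mem_homogTot_one hx hφ ▸ zero_mem _
  | n + 2 => Submodule.subset_span ⟨n + 2, by omega, hx, hφ⟩

theorem exists_graded_section (hp : PrimitiveFamily hI p β) (n : ℕ) :
    ∃ σ : TV θ →ₗ[ℂ] TV r ⧸ gradedKer I p, filtStep I p n ≤ LinearMap.ker σ ∧
      ∀ x ∈ homogTot r n, σ (famHom p x) = (gradedKer I p).mkQ x := by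
  obtain ⟨k, hk⟩ := exists_comp_eq_of_ker_le
    ((filtStep I p n).mkQ ∘ₗ (famHom p).toLinearMap ∘ₗ (homogTot r n).subtype)
    ((gradedKer I p).mkQ ∘ₗ (homogTot r n).subtype) (fun x hx => by
      simp only [LinearMap.mem_ker, LinearMap.comp_apply, Submodule.mkQ_apply,
        Submodule.Quotient.mk_eq_zero, Submodule.subtype_apply, AlgHom.toLinearMap_apply] at hx ⊢
      exact hp.mem_gradedKer x.2 hx)
  refine ⟨k ∘ₗ (filtStep I p n).mkQ, fun x hx => ?_, fun x hx => LinearMap.congr_fun hk ⟨x, hx⟩⟩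
  rw [LinearMap.mem_ker, LinearMap.comp_apply, Submodule.mkQ_apply,
    (Submodule.Quotient.mk_eq_zero _).2 hx, map_zero]

end PrimitiveFamily

/-- The component of total degree `n` of the tensor square of a family of linear maps `σ m`, thought
of as the projections to the homogeneous components of a graded space. -/
def antidiagonalMap {N : Type*} [AddCommGroup N] [Module ℂ N] (σ : ℕ → TV θ →ₗ[ℂ] N) (n : ℕ) :
    TV θ ⊗[ℂ] TV θ →ₗ[ℂ] N ⊗[ℂ] N :=
  ∑ ab ∈ Finset.HasAntidiagonal.antidiagonal n, TensorProduct.map (σ ab.1) (σ ab.2)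

section AntidiagonalMap

variable {N : Type*} [AddCommGroup N] [Module ℂ N] {σ : ℕ → TV θ →ₗ[ℂ] N}

theorem antidiagonalMap_tmul (n : ℕ) (x y : TV θ) :
    antidiagonalMap σ n (x ⊗ₜ y) =
      ∑ ab ∈ Finset.HasAntidiagonal.antidiagonal n, σ ab.1 x ⊗ₜ σ ab.2 y := by
  simp [antidiagonalMap, LinearMap.sum_apply]

theorem mixedSub_le_ker_antidiagonalMap (h : ∀ m, I ≤ LinearMap.ker (σ m)) (n : ℕ) :
    mixedSub I ≤ LinearMap.ker (antidiagonalMap σ n) :=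
  mixedPair_le
    (fun a ha b => by simp [antidiagonalMap_tmul, fun m => LinearMap.mem_ker.1 (h m ha)])
    (fun a b hb => by simp [antidiagonalMap_tmul, fun m => LinearMap.mem_ker.1 (h m hb)])

theorem antidiagonalMap_eq_zero
    (hlow : ∀ m, ∀ x ∈ lowerDeg r m, σ m (famHom p x) = 0) {l n : ℕ} (hl : l < n)
    {z : TV r ⊗[ℂ] TV r} (hz : z ∈ tensorDeg r l) :
    antidiagonalMap σ n (famHomTensor p z) = 0 := by
  refine (Submodule.span_le
    (p := LinearMap.ker (antidiagonalMap σ n ∘ₗ famHomTensor p))).2 ?_ hz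
  rintro _ ⟨v, w, rfl, rfl⟩
  rw [SetLike.mem_coe, LinearMap.mem_ker, LinearMap.comp_apply, famHomTensor_tmul,
    antidiagonalMap_tmul]
  refine Finset.sum_eq_zero fun ⟨a, b⟩ hab => ?_
  rw [Finset.HasAntidiagonal.mem_antidiagonal] at hab
  obtain h | h := Nat.lt_or_ge v.length a
  · rw [hlow a _ (Submodule.subset_span ⟨v, h, rfl⟩), TensorProduct.zero_tmul]
  · rw [hlow b _ (Submodule.subset_span ⟨w, by dsimp only at hab; omega, rfl⟩),
      TensorProduct.tmul_zero]

theorem antidiagonalMap_eq_map {π : TV r →ₗ[ℂ] N}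
    (hlow : ∀ m, ∀ x ∈ lowerDeg r m, σ m (famHom p x) = 0)
    (hσ : ∀ m, ∀ x ∈ homogTot r m, σ m (famHom p x) = π x) {n : ℕ} {z : TV r ⊗[ℂ] TV r}
    (hz : z ∈ tensorDeg r n) :
    antidiagonalMap σ n (famHomTensor p z) = TensorProduct.map π π z := by
  refine LinearMap.eqOn_span
    (f := antidiagonalMap σ n ∘ₗ famHomTensor p) (g := TensorProduct.map π π) ?_ hz
  rintro _ ⟨v, w, rfl, rfl⟩
  rw [LinearMap.comp_apply, famHomTensor_tmul, antidiagonalMap_tmul, TensorProduct.map_tmul,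
    Finset.sum_eq_single (v.length, w.length), hσ _ _ (wordElem_mem_homogTot v),
    hσ _ _ (wordElem_mem_homogTot w)]
  · rintro ⟨a, b⟩ hab hne
    rw [Finset.HasAntidiagonal.mem_antidiagonal] at hab
    rcases lt_trichotomy v.length a with h | h | h
    · rw [hlow a _ (Submodule.subset_span ⟨v, h, rfl⟩), TensorProduct.zero_tmul]
    · exact absurd (by ext <;> dsimp only at hab ⊢ <;> omega) hne
    · rw [hlow b _ (Submodule.subset_span ⟨w, by dsimp only at hab; omega, rfl⟩),
        TensorProduct.tmul_zero]
  · simp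

end AntidiagonalMap

namespace PrimitiveFamily

-- Up to terms of lower degree, `Δ x` is determined by the coproduct of `famHom p x` in `T(V)/I`;
-- the graded sections discard those terms.
theorem Δ_mem_mixedSub_gradedKer (hp : PrimitiveFamily hI p β)
    (S' : BraidedStr r (famMat q β)) {n : ℕ} {x : TV r} (hx : x ∈ homogTot r n)
    (hφ : famHom p x ∈ filtStep I p n) : S'.Δ x ∈ mixedSub (gradedKer I p) := by
  choose σ hker hσ using hp.exists_graded_section
  have hσI : ∀ m, I ≤ LinearMap.ker (σ m) := fun m => le_sup_left.trans (hker m)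
  have hlow : ∀ m, ∀ u ∈ lowerDeg r m, σ m (famHom p u) = 0 := fun m u hu =>
    hker m (Submodule.mem_sup_right ⟨u, hu, rfl⟩)
  obtain ⟨y, hy, _, ⟨u, hu, rfl⟩, h⟩ := Submodule.mem_sup.1 hφ
  have hΔu : antidiagonalMap σ n (famHomTensor p (S'.Δ u)) = 0 := by
    refine (Submodule.span_le
      (p := LinearMap.ker (antidiagonalMap σ n ∘ₗ famHomTensor p ∘ₗ S'.Δ))).2 ?_ hu
    rintro _ ⟨w, hw, rfl⟩
    exact antidiagonalMap_eq_zero hlow hw (Δ_mem_tensorDeg S' (wordElem_mem_homogTot w))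
  have hdiff : famHomTensor p (S'.Δ (x - u)) ∈ mixedSub I := by
    have hy' : famHom p (x - u) = y := by
      rw [map_sub, ← h, AlgHom.toLinearMap_apply, add_sub_cancel_right]
    rw [← Submodule.Quotient.mk_eq_zero, ← Submodule.mkQ_apply, hp.mkQ_famHomTensor_Δ, hy',
      Submodule.mkQ_apply, Submodule.Quotient.mk_eq_zero]
    exact hI.coideal y hy
  apply ker_map_mkQ_le_mixedSub
  rw [LinearMap.mem_ker, ← antidiagonalMap_eq_map hlow hσ (Δ_mem_tensorDeg S' hx)]
  have := mixedSub_le_ker_antidiagonalMap hσI n hdiff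
  rwa [LinearMap.mem_ker, map_sub, map_sub, map_sub, hΔu, sub_zero] at this

theorem gradedKer_isPreNicholsIdeal (hp : PrimitiveFamily hI p β)
    (S' : BraidedStr r (famMat q β)) : IsPreNicholsIdeal S' (gradedKer I p) where
  mul_left a _ := mul_mem_gradedKer_right hI a
  mul_right a _ := mul_mem_gradedKer_left hI a
  homog_ge2 := by
    refine le_antisymm (Submodule.span_le.2 ?_) (Submodule.span_le.2 fun x hx => hx.1)
    rintro x ⟨n, hn, hx, hφ⟩
    exact Submodule.subset_span ⟨Submodule.subset_span ⟨n, hn, hx, hφ⟩, n, hn, hx⟩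
  coideal x hx := by
    refine (Submodule.span_le (p := (mixedSub (gradedKer I p)).comap S'.Δ)).2 ?_ hx
    rintro y ⟨n, -, hy, hφ⟩
    exact hp.Δ_mem_mixedSub_gradedKer S' hy hφ

theorem finrank_map_gradedKer_le (hp : PrimitiveFamily hI p β) {L : ℕ}
    (hL : ∀ a, p a ∈ Wfil θ L) (m : ℕ) :
    Module.finrank ℂ ((homogTot r m).map (gradedKer I p).mkQ) ≤
      Module.finrank ℂ ((Wfil θ (L * m)).map I.mkQ) := by
  obtain ⟨σ, hker, hσ⟩ := hp.exists_graded_section m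
  have hle : (homogTot r m).map (gradedKer I p).mkQ ≤
      ((Wfil θ (L * m)).map I.mkQ).map (I.liftQ σ (le_sup_left.trans hker)) := by
    rintro _ ⟨x, hx, rfl⟩
    exact ⟨_, ⟨famHom p x, famHom_mem_Wfil hL hx, rfl⟩, hσ x hx⟩
  exact (Submodule.finrank_mono hle).trans (Submodule.finrank_map_le _ _)

theorem finGK_gradedKer (hp : PrimitiveFamily hI p β) (hGK : FinGK I) :
    FinGK (gradedKer I p) := by
  obtain ⟨C, d, hC⟩ := hGK
  let L := ∑ a, ∑ l, β a l
  have hL : ∀ a, p a ∈ Wfil θ L := fun a =>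
    homogTot_le_Wfil (Finset.single_le_sum (f := fun a => ∑ l, β a l)
      (fun _ _ => Nat.zero_le _) (Finset.mem_univ a)) (homogD_le_homogTot _ (hp.mem_homogD a))
  refine ⟨C * (L + 1) ^ d, d + 1, fun n => ?_⟩
  calc _ ≤ (n + 1) * (C * (L * n + 1) ^ d) := finrank_map_Wfil_le _ n _ fun m hm =>
        (hp.finrank_map_gradedKer_le hL m).trans ((hC _).trans (by gcongr))
    _ ≤ (n + 1) * (C * ((L + 1) * (n + 1)) ^ d) := by gcongr; nlinarith
    _ = _ := by rw [mul_pow]; ring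

theorem finiteRootSystem (hp : PrimitiveFamily hI p β) (hAAH : AAH) (hGK : FinGK I) :
    FiniteRootSystem (famMat q β) :=
  hAAH r _ (braidedStr (famMat q β))
    ((hp.finGK_gradedKer hGK).mono (le_sSup (hp.gradedKer_isPreNicholsIdeal _)))

end PrimitiveFamily

end GradedKernel

section Reflections

variable {n : ℕ} {q : Fin n → Fin n → ℂˣ} {i j k : Fin n}

theorem qtil_comm (i j : Fin n) : qtil q i j = qtil q j i := mul_comm _ _

theorem not_reflectable_of_one (hij : j ≠ i) (hi : (q i i : ℂ) = 1) (h : qtil q i j ≠ 1) :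
    ¬ reflectable q i := by
  intro hr
  obtain ⟨m, hm⟩ := hr j hij
  simp only [cSet, hi, qnum, one_pow, Finset.sum_const, Finset.card_range, nsmul_eq_mul, mul_one,
    one_mul, Set.mem_ofPred_eq, mul_eq_zero] at hm
  obtain hm | hm := hm
  · exact Nat.cast_add_one_ne_zero (R := ℂ) m (by exact_mod_cast hm)
  · exact h (sub_eq_zero.1 hm).symm

theorem cij_eq_zero (hij : i ≠ j) (h : qtil q i j = 1) : cij q i j = 0 := by
  have : sInf (cSet q i j) = 0 := Nat.sInf_eq_zero.2 (Or.inl (by simp [cSet, h]))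
  simp [cij, hij, this]

theorem cij_eq_neg_one (hij : i ≠ j) (hi : (q i i : ℂ) = -1) (h : qtil q i j ≠ 1) :
    cij q i j = -1 := by
  have h1 : 1 ∈ cSet q i j := by simp [cSet, hi, qnum, Finset.sum_range_succ]
  have h0 : 0 ∉ cSet q i j := by
    simpa [cSet, qnum, sub_eq_zero] using fun h' => h h'.symm
  have : sInf (cSet q i j) = 1 := by
    have hm := Nat.sInf_mem ⟨1, h1⟩
    have hle := Nat.sInf_le h1
    interval_cases sInf (cSet q i j)
    · exact absurd hm h0
    · rfl
  simp [cij, hij, this]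

theorem reflectMat_diag_of_ne_one (hij : i ≠ j) (hi : (q i i : ℂ) = -1) (h : qtil q i j ≠ 1) :
    (reflectMat q i j j : ℂ) = -((q j j : ℂ) * qtil q i j) := by
  simp only [reflectMat, cij_eq_neg_one hij hi h, qtil]
  push_cast
  simp only [hi, zpow_one, mul_neg, mul_one]
  ring

theorem reflectMat_diag_of_eq_one (hij : i ≠ j) (h : qtil q i j = 1) :
    (reflectMat q i j j : ℂ) = q j j := by
  simp [reflectMat, cij_eq_zero hij h]

theorem qtil_reflectMat_self (hij : i ≠ j) (hi : (q i i : ℂ) = -1) (h : qtil q i j ≠ 1) :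
    qtil (reflectMat q i) j i = (qtil q i j)⁻¹ := by
  have h1 : cij q i i = 2 := by simp [cij]
  have a := (q i j).ne_zero
  have b := (q j i).ne_zero
  simp only [qtil, reflectMat, cij_eq_neg_one hij hi h, h1]
  push_cast
  simp only [hi]
  norm_num [zpow_neg]
  field_simp

theorem qtil_reflectMat_of_ne_one (hij : i ≠ j) (hik : i ≠ k) (hi : (q i i : ℂ) = -1)
    (h : qtil q i j ≠ 1) (h' : qtil q i k ≠ 1) :
    qtil (reflectMat q i) j k = qtil q j k * qtil q i j * qtil q i k := by
  simp only [qtil, reflectMat, cij_eq_neg_one hij hi h, cij_eq_neg_one hik hi h']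
  push_cast
  simp only [hi]
  norm_num
  ring

theorem qtil_reflectMat_of_eq_one (hij : i ≠ j) (hik : i ≠ k) (hi : (q i i : ℂ) = -1)
    (h : qtil q i j ≠ 1) (h' : qtil q i k = 1) :
    qtil (reflectMat q i) j k = qtil q j k := by
  rw [show qtil (reflectMat q i) j k = qtil q j k * qtil q i k by
    simp only [qtil, reflectMat, cij_eq_neg_one hij hi h, cij_eq_zero hik h']
    push_cast
    norm_num
    ring, h', mul_one]

theorem not_finiteRootSystem_of_reach {q' : Fin n → Fin n → ℂˣ} {β : Fin n → ℤ}
    (hr : ReachRoot q q' β) (hij : i ≠ j) (hi : (q' i i : ℂ) = -1) (h : qtil q' i j ≠ 1)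
    (hj : (q' j j : ℂ) * qtil q' i j = -1) : ¬ FiniteRootSystem q := by
  intro hf
  refine not_reflectable_of_one (q := reflectMat q' i) (i := j) (j := i) hij ?_ ?_
    (hf.1 _ j ⟨_, hr.reflect i⟩)
  · rw [reflectMat_diag_of_ne_one hij hi h, hj, neg_neg]
  · rw [qtil_reflectMat_self hij hi h]
    simpa using h

theorem cubeRoot_ne_one {ζ : ℂ} (hζ : ζ ^ 2 + ζ + 1 = 0) : ζ ≠ 1 := by
  rintro rfl; norm_num at hζ

theorem neg_cubeRoot_ne_one {ζ : ℂ} (hζ : ζ ^ 2 + ζ + 1 = 0) : -ζ ≠ 1 := by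
  intro h
  have : ζ = -1 := by linear_combination -h
  rw [this] at hζ; norm_num at hζ

theorem not_finiteRootSystem_chain {ζ : ℂ} (hζ : ζ ^ 2 + ζ + 1 = 0) {q : Fin 3 → Fin 3 → ℂˣ}
    (h00 : (q 0 0 : ℂ) = -ζ) (h11 : (q 1 1 : ℂ) = -1) (h22 : (q 2 2 : ℂ) = -1)
    (h01 : qtil q 0 1 = ζ) (h02 : qtil q 0 2 = 1) (h12 : qtil q 1 2 = -1) :
    ¬ FiniteRootSystem q := by
  have h10 : qtil q 1 0 ≠ 1 := by rw [qtil_comm, h01]; exact cubeRoot_ne_one hζ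
  have h12' : qtil q 1 2 ≠ 1 := by rw [h12]; norm_num
  have h20 : qtil (reflectMat q 1) 2 0 = -ζ := by
    rw [qtil_comm, qtil_reflectMat_of_ne_one (by decide) (by decide) h11 h10 h12', h02,
      qtil_comm, h01, h12]
    ring
  refine not_finiteRootSystem_of_reach (i := 2) (j := 0) ((ReachRoot.simple 0).reflect 1)
    (by decide) ?_ ?_ ?_
  · rw [reflectMat_diag_of_ne_one (by decide) h11 h12', h22, h12]; ring
  · rw [h20]; exact neg_cubeRoot_ne_one hζ
  · rw [h20, reflectMat_diag_of_ne_one (by decide) h11 h10, h00, qtil_comm, h01]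
    linear_combination (1 - ζ) * hζ

theorem not_finiteRootSystem_fork {ζ : ℂ} (hζ : ζ ^ 2 + ζ + 1 = 0) {q : Fin 3 → Fin 3 → ℂˣ}
    (h00 : (q 0 0 : ℂ) = -1) (h11 : (q 1 1 : ℂ) = ζ) (h22 : (q 2 2 : ℂ) = -1)
    (h01 : qtil q 0 1 = -ζ) (h02 : qtil q 0 2 = 1) (h12 : qtil q 1 2 = -ζ) :
    ¬ FiniteRootSystem q := by
  have h01' : qtil q 0 1 ≠ 1 := by rw [h01]; exact neg_cubeRoot_ne_one hζ
  have h21 : qtil (reflectMat q 0) 2 1 = -ζ := by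
    rw [qtil_comm, qtil_reflectMat_of_eq_one (by decide) (by decide) h00 h01' h02, h12]
  refine not_finiteRootSystem_of_reach (i := 2) (j := 1) ((ReachRoot.simple 0).reflect 0)
    (by decide) ?_ ?_ ?_
  · rw [reflectMat_diag_of_eq_one (by decide) h02, h22]
  · rw [h21]; exact neg_cubeRoot_ne_one hζ
  · rw [h21, reflectMat_diag_of_ne_one (by decide) h00 h01', h11, h01]
    linear_combination (1 - ζ) * hζ

end Reflections

section PrimitiveElements

variable {θ : ℕ} {q : Fin θ → Fin θ → ℂˣ} {S : BraidedStr θ q} {I : Submodule ℂ (TV θ)}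

namespace IsPreNicholsIdeal

-- The functionals `counit` and `coord` separate `1` and the generators, and vanish on `p`.
theorem primitiveFamily_cons (hI : IsPreNicholsIdeal S I) {p : TV θ} {β : Fin θ → ℕ}
    (hp : p ∈ homogD θ β) (hprim : hI.Prim p) (hβ : 2 ≤ ∑ l, β l) (hpI : p ∉ I) {s : ℕ}
    {ls : Fin s → Fin θ} (hls : Function.Injective ls) :
    PrimitiveFamily hI (Fin.cons p fun a => gen θ (ls a)) (Fin.cons β fun a => δ θ (ls a)) where
  mem_homogD a := by
    cases a using Fin.cases with
    | zero => simpa using hp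
    | succ a => simpa using gen_mem_homogD _
  prim a := by
    cases a using Fin.cases with
    | zero => simpa using hprim
    | succ a => rw [Fin.cons_succ]; exact hI.prim_gen _
  linearIndependent := by
    refine Fintype.linearIndependent_iff.2 fun c hc => ?_
    have hmem :
        c none • 1 + (c (some 0) • p + ∑ a : Fin s, c (some a.succ) • gen θ (ls a)) ∈ I := by
      rw [← Submodule.Quotient.mk_eq_zero, ← Submodule.mkQ_apply]
      simpa only [Fintype.sum_option, Fin.sum_univ_succ, Option.elim, Fin.cons_zero, Fin.cons_succ,
        ← map_smul, ← map_add, ← map_sum] using hc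
    have hp' := homogD_le_homogTot β hp
    have hcounit : counit p = 0 := homogTot_le_ker_counit (one_le_two.trans hβ) hp'
    have hcoord : ∀ m, coord m p = 0 := fun m => homogTot_le_ker_coord m hβ hp'
    have h1 : c none = 0 := by simpa [hcounit] using hI.le_ker_counit hmem
    have hgen : ∀ a : Fin s, c (some a.succ) = 0 := fun a => by
      simpa [hcoord, coord_gen, hls.eq_iff] using hI.le_ker_coord (ls a) hmem
    have hc0 : c (some 0) = 0 := by
      by_contra h
      refine hpI ((I.smul_mem_iff h).1 ?_)
      simpa [h1, hgen] using hmem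
    rintro (- | a)
    · exact h1
    · exact Fin.cases hc0 hgen a

theorem finiteRootSystem_cons (hI : IsPreNicholsIdeal S I) (hAAH : AAH) (hGK : FinGK I)
    {p : TV θ} {β : Fin θ → ℕ} (hp : p ∈ homogD θ β) (hprim : hI.Prim p) (hβ : 2 ≤ ∑ l, β l)
    (hpI : p ∉ I) {s : ℕ} {ls : Fin s → Fin θ} (hls : Function.Injective ls) :
    FiniteRootSystem (famMat q (Fin.cons β fun a => δ θ (ls a))) :=
  (hI.primitiveFamily_cons hp hprim hβ hpI hls).finiteRootSystem hAAH hGK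

-- If `p ∉ I`, then `p` and `x_l` span a braided vector space with a non-isolated vertex of
-- label `1`, which has no finite root system.
theorem mem_of_prim (hI : IsPreNicholsIdeal S I) (hAAH : AAH) (hGK : FinGK I) {p : TV θ}
    {β : Fin θ → ℕ} (hp : p ∈ homogD θ β) (hprim : hI.Prim p) (hβ : 2 ≤ ∑ l, β l)
    (h1 : qf q β β = 1) (l : Fin θ) (hl : qf q β (δ θ l) * qf q (δ θ l) β ≠ 1) : p ∈ I := by
  by_contra hpI
  have hf := hI.finiteRootSystem_cons hAAH hGK hp hprim hβ hpI
    (ls := fun _ : Fin 1 => l) (Function.injective_of_subsingleton _)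
  refine not_reflectable_of_one (i := 0) (j := 1) (by decide) ?_ ?_
    (hf.1 _ 0 ⟨_, ReachRoot.simple 0⟩)
  · simpa [famMat] using h1
  · simpa [famMat, qtil] using hl

end IsPreNicholsIdeal

end PrimitiveElements

section SkewAlgebra

variable {K A : Type*} [CommRing K] [Ring A] [Algebra K A]

/-- The skew bracket `[x, y]_s = x y - s y x`. The braided bracket of two homogeneous elements is
the case in which `s` is the value of the bicharacter on their degrees. -/
def skewBracket (s : K) (x y : A) : A := x * y - s • (y * x)

/-- `x` and `y` commute up to the scalar `s`, that is `[x, y]_s = 0`. -/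
def SkewCommute (s : K) (x y : A) : Prop := x * y = s • (y * x)

variable {s s' t t' p p' r r' ζ : K}

theorem skewBracket_eq_zero {x y : A} : skewBracket s x y = 0 ↔ SkewCommute s x y := sub_eq_zero

theorem skewBracket_add_left (s : K) (x y z : A) :
    skewBracket s (x + y) z = skewBracket s x z + skewBracket s y z := by
  simp only [skewBracket, add_mul, mul_add]
  module

theorem skewBracket_add_right (s : K) (x y z : A) :
    skewBracket s x (y + z) = skewBracket s x y + skewBracket s x z := by
  simp only [skewBracket, add_mul, mul_add]
  module

theorem skewBracket_smul_left (s c : K) (x y : A) :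
    skewBracket s (c • x) y = c • skewBracket s x y := by
  simp only [skewBracket, smul_mul_assoc, mul_smul_comm]
  module

theorem skewBracket_smul_right (s c : K) (x y : A) :
    skewBracket s x (c • y) = c • skewBracket s x y := by
  simp only [skewBracket, smul_mul_assoc, mul_smul_comm]
  module

theorem skewBracket_add_smul_add_smul {x₁ x₂ y₁ y₂ : A} (c : K)
    (hxy : skewBracket s x₂ y₁ + skewBracket s y₂ x₁ = 0) (hy : SkewCommute s y₂ y₁) :
    skewBracket s (x₂ + c • y₂) (x₁ + c • y₁) = skewBracket s x₂ x₁ := by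
  simp only [skewBracket_add_left, skewBracket_add_right, skewBracket_smul_left,
    skewBracket_smul_right, skewBracket_eq_zero.2 hy, eq_neg_of_add_eq_zero_left hxy]
  module

theorem skewBracket_skewBracket {x y z : A} (hxz : SkewCommute r x z) :
    skewBracket (p * r) x (skewBracket t y z) = skewBracket (t * r) (skewBracket p x y) z := by
  have hxz' (w : A) : x * (z * w) = r • (z * (x * w)) := by
    rw [← mul_assoc, hxz, smul_mul_assoc, mul_assoc]
  rw [SkewCommute] at hxz
  simp only [skewBracket, mul_sub, sub_mul, mul_assoc, hxz', hxz, smul_mul_assoc, mul_smul_comm,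
    smul_smul]
  match_scalars <;> grind

namespace SkewCommute

theorem eq {x y : A} (h : SkewCommute s x y) : x * y = s • (y * x) := h

theorem left_comm {x y : A} (h : SkewCommute s x y) (z : A) :
    x * (y * z) = s • (y * (x * z)) := by
  rw [← mul_assoc, h.eq, smul_mul_assoc, mul_assoc]

theorem symm {x y : A} (h : SkewCommute s x y) (hs : s * s' = 1) : SkewCommute s' y x := by
  rw [SkewCommute, h.eq, smul_smul, mul_comm s', hs, one_smul]

theorem skewBracket_right {x y z : A} (hxy : SkewCommute r x y) (hxz : SkewCommute r' x z) :
    SkewCommute (r * r') x (skewBracket s y z) := by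
  simp only [SkewCommute, skewBracket, mul_sub, sub_mul, mul_assoc, hxy.left_comm, hxz.left_comm,
    hxy.eq, hxz.eq, smul_mul_assoc, mul_smul_comm, smul_smul]
  match_scalars <;> ring

theorem sq_add {a b : A} (h : SkewCommute (-1 : K) b a) :
    (a + b) * (a + b) = a * a + b * b := by
  simp only [mul_add, add_mul, h.eq]
  module

theorem cube_add (hζ : ζ ^ 2 + ζ + 1 = 0) {a b : A} (h : SkewCommute ζ b a) :
    (a + b) * ((a + b) * (a + b)) = a * (a * a) + b * (b * b) := by
  simp only [mul_add, add_mul, h.eq, h.left_comm, mul_smul_comm, smul_smul]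
  match_scalars <;> grind

theorem skewBracket_add_add {a b c d : A} (hbc : SkewCommute s b c) (hda : SkewCommute s' d a)
    (hs : s * s' = 1) :
    skewBracket s (a + b) (c + d) = skewBracket s a c + skewBracket s b d := by
  simp only [skewBracket, mul_add, add_mul, hbc.eq, hda.eq]
  match_scalars <;> grind

theorem skewBracket_add_add_of_mul_eq_neg_one {a b c d : A} (hbc : SkewCommute s b c)
    (hda : SkewCommute s' d a) (hs : s * s' = -1) :
    skewBracket s (a + b) (c + d) =
      skewBracket s a c + skewBracket s b d + (2 : K) • (a * d) := by
  simp only [skewBracket, mul_add, add_mul, hbc.eq, hda.eq]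
  match_scalars <;> grind

theorem skewBracket_add_add_of_mul_eq_neg {a b c d : A} (hbc : SkewCommute s b c)
    (hda : SkewCommute s' d a) (hs : s * s' = -ζ) :
    skewBracket s (a + b) (c + d) =
      skewBracket s a c + skewBracket s b d + (1 + ζ) • (a * d) := by
  simp only [skewBracket, mul_add, add_mul, hbc.eq, hda.eq]
  match_scalars <;> grind

theorem skewBracket_skewBracket_add_add {a b c d : A} (hbc : SkewCommute s b c)
    (hda : SkewCommute s' d a) (hba : SkewCommute ζ b a) (hs : s * s' = -ζ)
    (hζ : ζ ^ 2 + ζ + 1 = 0) :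
    skewBracket (ζ * s) (a + b) (skewBracket s (a + b) (c + d)) =
      skewBracket (ζ * s) a (skewBracket s a c) + skewBracket (ζ * s) b (skewBracket s b d) +
        a * skewBracket s b d + a * (a * d) := by
  simp only [skewBracket, mul_add, add_mul, mul_sub, sub_mul, mul_assoc, hba.left_comm, hba.eq,
    hbc.left_comm, hbc.eq, hda.left_comm, hda.eq, smul_mul_assoc, mul_smul_comm, smul_smul]
  match_scalars <;> grind

theorem skewBracket_add_mul {a b u f : A} (hbu : SkewCommute p b u) (hfa : SkewCommute r' f a)
    (hbf : SkewCommute r b f) (hr : r * r' = 1) :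
    skewBracket (p * r) (a + b) (u * f) = skewBracket p a u * f := by
  simp only [skewBracket, mul_add, add_mul, sub_mul, mul_assoc, hbu.left_comm, hbf.eq, hfa.eq,
    smul_mul_assoc, mul_smul_comm, smul_smul]
  match_scalars <;> grind

theorem skewBracket_of_sq {d f : A} (h : SkewCommute (t ^ 2) d (f * f)) (ht : t * t' = -1) :
    SkewCommute t' f (skewBracket t d f) := by
  simp only [SkewCommute, skewBracket, mul_sub, sub_mul, mul_assoc, h.eq, smul_mul_assoc,
    mul_smul_comm]
  match_scalars <;> grind

theorem sq_skewBracket_add_add {a b c d : A} (hbc : SkewCommute t b c) (hda : SkewCommute t' d a)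
    (ht : t * t' = -1) (hba : SkewCommute (-1 : K) b a) (hdc : SkewCommute (-1 : K) d c)
    (ha : a * a = 0) (hbd : SkewCommute (t ^ 2) b (d * d)) :
    skewBracket t (a + b) (c + d) * skewBracket t (a + b) (c + d) =
      skewBracket t a c * skewBracket t a c + skewBracket t b d * skewBracket t b d := by
  have ha' (z : A) : a * (a * z) = 0 := by rw [← mul_assoc, ha, zero_mul]
  have hbd' : b * (d * d) = t ^ 2 • (d * (d * b)) := by rw [hbd.eq, mul_assoc]
  simp only [skewBracket, mul_add, add_mul, mul_sub, sub_mul, mul_assoc, hba.eq, hba.left_comm,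
    hbc.eq, hbc.left_comm, hda.eq, hda.left_comm, hdc.eq, hdc.left_comm, ha', hbd',
    smul_mul_assoc, mul_smul_comm, smul_smul, mul_zero, smul_zero]
  match_scalars <;> grind

end SkewCommute

/-- The element `[[x, [x, y]], [x, y]]` with the scalars that the braided brackets carry when `x`
has self-braiding `ζ` and `x, y` have braiding `s`. For `x = x_i`, `y = x_j` it is
`[x_{iij}, x_{ij}]_c`, and for `x = x_i`, `y = x_{jk}` it is `[x_{iijk}, x_{ijk}]_c`. -/
def quinticBracket (ζ s : K) (x y : A) : A :=
  skewBracket s (skewBracket (ζ * s) x (skewBracket s x y)) (skewBracket s x y)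

theorem quinticBracket_add_add {a b c d : A} (hζ : ζ ^ 2 + ζ + 1 = 0) (hs : s * s' = -ζ)
    (hba : SkewCommute ζ b a) (hbc : SkewCommute s b c) (hda : SkewCommute s' d a)
    (hdc : SkewCommute (-1 : K) d c) (ha : a * (a * a) = 0) (hb : b * (b * b) = 0)
    (hc : c * c = 0) (hd : d * d = 0) :
    quinticBracket ζ s (a + b) (c + d) = quinticBracket ζ s a c + quinticBracket ζ s b d := by
  have cube {x : A} (hx : x * (x * x) = 0) (z : A) : x * (x * (x * z)) = 0 := by
    rw [← mul_assoc x x z, ← mul_assoc, hx, zero_mul]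
  have sq {x : A} (hx : x * x = 0) (z : A) : x * (x * z) = 0 := by
    rw [← mul_assoc, hx, zero_mul]
  simp only [quinticBracket, skewBracket, mul_add, add_mul, mul_sub, sub_mul, mul_assoc, hba.eq,
    hba.left_comm, hbc.eq, hbc.left_comm, hda.eq, hda.left_comm, hdc.eq, hdc.left_comm, cube ha,
    hb, cube hb, sq hc, hd, sq hd, smul_mul_assoc, mul_smul_comm, smul_smul, mul_zero, smul_zero]
  match_scalars <;> grind

theorem skewCommute_skewBracket_skewBracket {a u : A} (hζ : ζ ^ 2 + ζ + 1 = 0)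
    (ha : a * (a * a) = 0) :
    SkewCommute (ζ ^ 2 * p) a (skewBracket (ζ * p) a (skewBracket p a u)) := by
  have ha' (z : A) : a * (a * (a * z)) = 0 := by
    rw [← mul_assoc a a z, ← mul_assoc, ha, zero_mul]
  simp only [SkewCommute, skewBracket, mul_sub, sub_mul, mul_assoc, ha, ha', smul_mul_assoc,
    mul_smul_comm, mul_zero, smul_zero]
  match_scalars <;> grind

end SkewAlgebra

section CrossTerms

/-! Throughout, `a, e` and `f, Q` stand for the images of `x_i, x_k` on the left and of
`x_k, x_{jk}` on the right; `G₁, G₂` for those of `x_{ij}, x_{iij}` on the left; `c₁, c₂` and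
`d₁, d₂` for those of `x_{ijk}, x_{iijk}` on the left and on the right. -/

variable {K A : Type*} [CommRing K] [Ring A] [Algebra K A] {p p' r r' t t' l ζ : K}
  {a e f Q G₁ G₂ c₁ c₂ d₁ d₂ : A}

/-- The consequence of `[x_{iij}, x_{ij}]_c = 0` in degree `3α_i + 2α_j + α_k`. -/
theorem SkewCommute.mixed_relation (hG : SkewCommute p G₂ G₁) (hl : l * (t * r) = -1) :
    skewBracket (t * r * r) G₂ e * G₁ + (p * l) • (G₁ * skewBracket (t * r * r) G₂ e) =
      l • (G₂ * skewBracket (t * r) G₁ e) + (p * r) • (skewBracket (t * r) G₁ e * G₂) := by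
  simp only [skewBracket, mul_sub, sub_mul, mul_assoc, hG.eq, hG.left_comm, smul_mul_assoc,
    mul_smul_comm]
  match_scalars <;> grind

theorem cross_term_mul_mul (hGG : SkewCommute p G₂ G₁) (hfG₁ : SkewCommute l f G₁)
    (hfG₂ : SkewCommute (l * r') f G₂) (hr : r * r' = 1) :
    SkewCommute (p * r) (G₂ * f) (G₁ * f) := by
  simp only [SkewCommute, mul_assoc, hfG₁.left_comm, hfG₂.left_comm, hGG.left_comm, smul_smul,
    mul_smul_comm]
  match_scalars
  grind

theorem cross_term_left (hr : r * r' = 1) (hfc₁ : SkewCommute (-l) f c₁)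
    (hfc₂ : SkewCommute (-(l * r')) f c₂)
    (hmix : c₂ * G₁ + (p * l) • (G₁ * c₂) = l • (G₂ * c₁) + (p * r) • (c₁ * G₂)) :
    skewBracket (p * r) c₂ (G₁ * f) + skewBracket (p * r) (G₂ * f) c₁ = 0 := by
  have hmix' := congrArg (· * f) hmix
  simp only [add_mul, smul_mul_assoc, mul_assoc] at hmix'
  simp only [skewBracket, mul_assoc, hfc₁.eq, hfc₂.eq, mul_smul_comm, smul_smul]
  rw [eq_sub_of_add_eq hmix']
  match_scalars <;> grind

theorem cross_term_right₂ (hr : r * r' = 1) (hfd₂ : SkewCommute (l * r') f d₂)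
    (hdG : SkewCommute (l * p) d₂ G₁) : SkewCommute (p * r) d₂ (G₁ * f) := by
  simp only [SkewCommute, mul_assoc, hdG.left_comm, hfd₂.eq, smul_smul, mul_smul_comm]
  match_scalars
  grind

theorem cross_term_right₁ (hζ : ζ ^ 2 + ζ + 1 = 0) (hp : p * p' = -ζ) (hr : r * r' = 1)
    (hfa : SkewCommute r' f a) (hfd₁ : SkewCommute l f d₁)
    (hdG₁ : SkewCommute (ζ ^ 2 * l) d₁ G₁) (hdG₂ : SkewCommute (l * (p' * r')) d₁ G₂)
    (haG₁ : skewBracket (ζ * p) a G₁ = G₂) :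
    skewBracket (p * r) (a * d₁) (G₁ * f) + skewBracket (p * r) (G₂ * f) d₁ = 0 := by
  have haG₁' (z : A) : a * (G₁ * z) = G₂ * z + (ζ * p) • (G₁ * (a * z)) := by
    rw [← mul_assoc, eq_add_of_sub_eq haG₁, add_mul, smul_mul_assoc, mul_assoc]
  simp only [skewBracket, mul_assoc, hdG₁.left_comm, hdG₂.left_comm, haG₁', hfa.left_comm,
    hfd₁.eq, mul_smul_comm, smul_smul, smul_add]
  match_scalars <;> grind

theorem cross_term_right₀ (hζ : ζ ^ 2 + ζ + 1 = 0) (hp : p * p' = -ζ) (hr : r * r' = 1)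
    (hfa : SkewCommute r' f a) (hfQ : SkewCommute t' f Q)
    (hQG₁ : SkewCommute (-(p' * (r' * t'))) Q G₁)
    (hQG₂ : SkewCommute (-(p' * (r' * t') * (p' * r'))) Q G₂)
    (haG₁ : skewBracket (ζ * p) a G₁ = G₂) (haG₂ : SkewCommute (ζ ^ 2 * p) a G₂) :
    skewBracket (p * r) (a * (a * Q)) (G₁ * f) +
      (1 + ζ) • skewBracket (p * r) (G₂ * f) (a * Q) = 0 := by
  have haG₁' (z : A) : a * (G₁ * z) = G₂ * z + (ζ * p) • (G₁ * (a * z)) := by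
    rw [← mul_assoc, eq_add_of_sub_eq haG₁, add_mul, smul_mul_assoc, mul_assoc]
  simp only [skewBracket, mul_assoc, hQG₁.left_comm, hQG₂.left_comm, haG₁', haG₂.left_comm,
    hfa.left_comm, hfQ.eq, mul_smul_comm, smul_smul, mul_add, smul_add]
  match_scalars <;> grind

end CrossTerms

section Relations

variable {θ : ℕ} {q : Fin θ → Fin θ → ℂˣ} {S : BraidedStr θ q} {I : Submodule ℂ (TV θ)}

theorem map_brk {A : Type*} [Ring A] [Algebra ℂ A] (F : TV θ →ₐ[ℂ] A) (a b : Fin θ → ℕ)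
    (x y : TV θ) : F (brk q a b x y) = skewBracket (qf q a b) (F x) (F y) := by
  simp [brk, skewBracket]

theorem sum_δ (l : Fin θ) : ∑ m, δ θ l m = 1 := by simp [δ]

/-- The labels of the generalized Dynkin diagram on the vertices `i, j, k` for which
`[x_{iijk}, x_{ijk}]_c` is considered; `cube` says that `ζ` is a primitive cube root of unity. -/
structure SubDiagram (q : Fin θ → Fin θ → ℂˣ) (i j k : Fin θ) (ζ : ℂ) : Prop where
  cube : ζ ^ 2 + ζ + 1 = 0
  ii : (q i i : ℂ) = ζ
  jj : (q j j : ℂ) = -1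
  kk : (q k k : ℂ) = -1
  ij : (q i j : ℂ) * q j i = -ζ
  ik : (q i k : ℂ) * q k i = 1
  jk : (q j k : ℂ) * q k j = -1

variable {i j k : Fin θ} {ζ : ℂ}

namespace SubDiagram

theorem ij_ne (D : SubDiagram q i j k ζ) : i ≠ j := by
  rintro rfl
  have := D.cube
  rw [← D.ii, D.jj] at this
  norm_num at this

theorem jk_ne (D : SubDiagram q i j k ζ) : j ≠ k := by
  rintro rfl
  have := D.jk
  rw [D.jj] at this
  norm_num at this

theorem sq_ne_one (D : SubDiagram q i j k ζ) : ζ ^ 2 ≠ 1 := by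
  intro h
  have hζ : ζ = -2 := by linear_combination D.cube - h
  rw [hζ] at h
  norm_num at h

end SubDiagram

namespace IsPreNicholsIdeal

theorem prim_brk (hI : IsPreNicholsIdeal S I) {a b : Fin θ → ℕ} {x y : TV θ}
    (hx : x ∈ homogD θ a) (hy : y ∈ homogD θ b) (hxP : hI.Prim x) (hyP : hI.Prim y)
    (hab : qf q a b * qf q b a = 1) : hI.Prim (brk q a b x y) := by
  unfold Prim at *
  rw [map_brk, map_brk, map_brk, hxP, hyP]
  exact SkewCommute.skewBracket_add_add (hI.quotRight_mul_quotLeft hx hy)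
    (hI.quotRight_mul_quotLeft hy hx) hab

theorem prim_mul_self (hI : IsPreNicholsIdeal S I) {a : Fin θ → ℕ} {x : TV θ}
    (hx : x ∈ homogD θ a) (hxP : hI.Prim x) (ha : qf q a a = -1) : hI.Prim (x * x) := by
  unfold Prim at *
  rw [map_mul, map_mul, map_mul, hxP]
  exact SkewCommute.sq_add (ha ▸ hI.quotRight_mul_quotLeft hx hx)

theorem prim_mul_mul_self (hI : IsPreNicholsIdeal S I) {a : Fin θ → ℕ} {x : TV θ}
    (hx : x ∈ homogD θ a) (hxP : hI.Prim x) (hζ : ζ ^ 2 + ζ + 1 = 0) (ha : qf q a a = ζ) :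
    hI.Prim (x * (x * x)) := by
  unfold Prim at *
  simp only [map_mul, hxP]
  exact SkewCommute.cube_add hζ (ha ▸ hI.quotRight_mul_quotLeft hx hx)

theorem gen_cube_mem (hI : IsPreNicholsIdeal S I) (hAAH : AAH) (hGK : FinGK I)
    (hζ : ζ ^ 2 + ζ + 1 = 0) (hi : (q i i : ℂ) = ζ) (l : Fin θ)
    (hl : ((q i l : ℂ) * q l i) ^ 3 ≠ 1) : gen θ i * (gen θ i * gen θ i) ∈ I := by
  have hx := gen_mem_homogD i
  refine hI.mem_of_prim hAAH hGK (mul_mem_homogD hx (mul_mem_homogD hx hx))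
    (hI.prim_mul_mul_self hx (hI.prim_gen i) hζ (by simpa using hi)) ?_ ?_ l ?_
  · simp [Finset.sum_add_distrib, sum_δ]
  · simp only [qf_add_left, qf_add_right, qf_δ, hi]
    grind
  · simp only [qf_add_left, qf_add_right, qf_δ]
    convert hl using 1
    ring

theorem gen_sq_mem (hI : IsPreNicholsIdeal S I) (hAAH : AAH) (hGK : FinGK I)
    (hj : (q j j : ℂ) = -1) (l : Fin θ) (hl : ((q j l : ℂ) * q l j) ^ 2 ≠ 1) :
    gen θ j * gen θ j ∈ I := by
  have hx := gen_mem_homogD j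
  refine hI.mem_of_prim hAAH hGK (mul_mem_homogD hx hx)
    (hI.prim_mul_self hx (hI.prim_gen j) (by simpa using hj)) ?_ ?_ l ?_
  · simp [Finset.sum_add_distrib, sum_δ]
  · simp only [qf_add_left, qf_add_right, qf_δ, hj]
    norm_num
  · simp only [qf_add_left, qf_add_right, qf_δ]
    convert hl using 1
    ring

end IsPreNicholsIdeal

namespace SubDiagram

theorem gen_cube_mem (D : SubDiagram q i j k ζ) (hI : IsPreNicholsIdeal S I) (hAAH : AAH)
    (hGK : FinGK I) : gen θ i * (gen θ i * gen θ i) ∈ I := by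
  refine hI.gen_cube_mem hAAH hGK D.cube D.ii j ?_
  have := D.cube
  rw [D.ij]
  grind

theorem gen_sq_mem (D : SubDiagram q i j k ζ) (hI : IsPreNicholsIdeal S I) (hAAH : AAH)
    (hGK : FinGK I) : gen θ j * gen θ j ∈ I := by
  refine hI.gen_sq_mem hAAH hGK D.jj i ?_
  rw [mul_comm, D.ij, neg_sq]
  exact D.sq_ne_one

-- Otherwise `x_{ik}, x_j, x_k` span a braided vector space without a finite root system.
theorem brk_gen_mem (D : SubDiagram q i j k ζ) (hI : IsPreNicholsIdeal S I) (hAAH : AAH)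
    (hGK : FinGK I) : brk q (δ θ i) (δ θ k) (gen θ i) (gen θ k) ∈ I := by
  have hi := gen_mem_homogD i
  have hk := gen_mem_homogD k
  have hjk := D.jk_ne
  have prim := hI.prim_brk hi hk (hI.prim_gen i) (hI.prim_gen k) (by simpa using D.ik)
  obtain ⟨hζ, ii, jj, kk, ij, ik, jk⟩ := D
  by_contra hmem
  have hf := hI.finiteRootSystem_cons hAAH hGK (brk_mem_homogD q hi hk) prim
    (by simp [Finset.sum_add_distrib, sum_δ]) hmem (ls := ![j, k])
    (by intro a b h; fin_cases a <;> fin_cases b <;> simp_all)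
  rw [show (Fin.cons (δ θ i + δ θ k) fun a => δ θ (![j, k] a)) =
    ![δ θ i + δ θ k, δ θ j, δ θ k] from funext fun a => by fin_cases a <;> rfl] at hf
  refine not_finiteRootSystem_chain hζ ?_ ?_ ?_ ?_ ?_ ?_ hf <;>
    simp only [famMat, qtil, Units.val_mk0, Matrix.cons_val, qf_add_left, qf_add_right, qf_δ] <;>
    grind

-- Otherwise `[x_j, x_k²]_c, x_i, x_j` span a braided vector space without a finite root system.
theorem brk_gen_sq_mem (D : SubDiagram q i j k ζ) (hI : IsPreNicholsIdeal S I) (hAAH : AAH)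
    (hGK : FinGK I) : brk q (δ θ j) (δ θ k + δ θ k) (gen θ j) (gen θ k * gen θ k) ∈ I := by
  have hj := gen_mem_homogD j
  have hk := gen_mem_homogD k
  have hkk := mul_mem_homogD hk hk
  have hij := D.ij_ne
  obtain ⟨hζ, ii, jj, kk, ij, ik, jk⟩ := D
  have prim := hI.prim_brk hj hkk (hI.prim_gen j)
    (hI.prim_mul_self hk (hI.prim_gen k) (by simpa using kk))
    (by simp only [qf_add_left, qf_add_right, qf_δ]; grind)
  by_contra hmem
  have hf := hI.finiteRootSystem_cons hAAH hGK (brk_mem_homogD q hj hkk) prim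
    (by simp [Finset.sum_add_distrib, sum_δ]) hmem (ls := ![i, j])
    (by intro a b h; fin_cases a <;> fin_cases b <;> simp_all)
  rw [show (Fin.cons (δ θ j + (δ θ k + δ θ k)) fun a => δ θ (![i, j] a)) =
    ![δ θ j + (δ θ k + δ θ k), δ θ i, δ θ j] from funext fun a => by fin_cases a <;> rfl] at hf
  refine not_finiteRootSystem_fork hζ ?_ ?_ ?_ ?_ ?_ ?_ hf <;>
    simp only [famMat, qtil, Units.val_mk0, Matrix.cons_val, qf_add_left, qf_add_right, qf_δ] <;>
    grind

end SubDiagram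

end Relations

section MainRelation

variable {θ : ℕ} {q : Fin θ → Fin θ → ℂˣ} {S : BraidedStr θ q} {I : Submodule ℂ (TV θ)}

theorem map_xw_cons {A : Type*} [Ring A] [Algebra ℂ A] (F : TV θ →ₐ[ℂ] A) (m n : Fin θ)
    (w : List (Fin θ)) : F (xw q (m :: n :: w)) =
      skewBracket (qf q (δ θ m) (degW θ (n :: w))) (F (gen θ m)) (F (xw q (n :: w))) := by
  rw [xw_cons q m (List.cons_ne_nil n w), xwBrk, map_brk, xw_singleton, degW_cons, degW_nil,
    add_zero]

theorem map_xwBrk {A : Type*} [Ring A] [Algebra ℂ A] (F : TV θ →ₐ[ℂ] A) (v w : List (Fin θ)) :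
    F (xwBrk q v w) = skewBracket (qf q (degW θ v) (degW θ w)) (F (xw q v)) (F (xw q w)) :=
  map_brk F _ _ _ _

namespace IsPreNicholsIdeal

variable {a b : Fin θ → ℕ} {x y : TV θ}

theorem skewCommute_quotLeft (hI : IsPreNicholsIdeal S I) (h : brk q a b x y ∈ I) :
    SkewCommute (qf q a b) (hI.quotLeft x) (hI.quotLeft y) := by
  rw [← skewBracket_eq_zero, ← map_brk, hI.quotLeft_eq_zero h]

theorem skewCommute_quotRight (hI : IsPreNicholsIdeal S I) (h : brk q a b x y ∈ I) :
    SkewCommute (qf q a b) (hI.quotRight x) (hI.quotRight y) := by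
  rw [← skewBracket_eq_zero, ← map_brk, hI.quotRight_eq_zero h]

theorem skewCommute_xw (hI : IsPreNicholsIdeal S I) (v w : List (Fin θ)) {c : ℂ}
    (hc : qf q (degW θ v) (degW θ w) = c) :
    SkewCommute c (hI.quotRight (xw q v)) (hI.quotLeft (xw q w)) :=
  hc ▸ hI.quotRight_mul_quotLeft (xw_mem_homogD q v) (xw_mem_homogD q w)

theorem skewCommute_gen (hI : IsPreNicholsIdeal S I) (m n : Fin θ) :
    SkewCommute (q m n : ℂ) (hI.quotRight (gen θ m)) (hI.quotLeft (gen θ n)) := by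
  simpa using hI.skewCommute_xw (q := q) [m] [n] rfl

theorem quotΔ_gen (hI : IsPreNicholsIdeal S I) (m : Fin θ) :
    hI.quotΔ (gen θ m) = hI.quotLeft (gen θ m) + hI.quotRight (gen θ m) :=
  hI.prim_gen m

end IsPreNicholsIdeal

namespace SubDiagram

variable {i j k : Fin θ} {ζ : ℂ}

theorem map_xwBrk_ij (D : SubDiagram q i j k ζ) {A : Type*} [Ring A] [Algebra ℂ A]
    (F : TV θ →ₐ[ℂ] A) :
    F (xwBrk q [i, i, j] [i, j]) = quinticBracket ζ (q i j : ℂ) (F (gen θ i)) (F (gen θ j)) := by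
  have h : qf q (degW θ [i, i, j]) (degW θ [i, j]) = q i j := by
    simp only [degW_cons, degW_nil, qf_add_left, qf_add_right, qf_δ, qf_zero_left, qf_zero_right]
    grind [D.cube, D.ii, D.jj, D.ij]
  rw [map_xwBrk, h]
  simp [map_xw_cons, quinticBracket, D.ii]

theorem qf_iijk_ijk (D : SubDiagram q i j k ζ) :
    qf q (degW θ [i, i, j, k]) (degW θ [i, j, k]) = q i j * q i k := by
  simp only [degW_cons, degW_nil, qf_add_left, qf_add_right, qf_δ, qf_zero_left, qf_zero_right]
  grind [D.cube, D.ii, D.jj, D.kk, D.ij, D.ik, D.jk]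

theorem map_xwBrk_ijk (D : SubDiagram q i j k ζ) {A : Type*} [Ring A] [Algebra ℂ A]
    (F : TV θ →ₐ[ℂ] A) : F (xwBrk q [i, i, j, k] [i, j, k]) =
      quinticBracket ζ (q i j * q i k : ℂ) (F (gen θ i)) (F (xw q [j, k])) := by
  rw [map_xwBrk, D.qf_iijk_ijk]
  simp [map_xw_cons, quinticBracket, D.ii]

theorem xw_jk_sq_mem (D : SubDiagram q i j k ζ) (hI : IsPreNicholsIdeal S I) (hAAH : AAH)
    (hGK : FinGK I) : xw q [j, k] * xw q [j, k] ∈ I := by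
  have hx := xw_mem_homogD q [j, k]
  refine hI.mem_of_prim hAAH hGK (mul_mem_homogD hx hx) ?_ ?_ ?_ i ?_
  · have hjk := hI.skewCommute_gen j k
    have hkj := hI.skewCommute_gen k j
    have hjj : SkewCommute (-1 : ℂ) (hI.quotRight (gen θ j)) (hI.quotLeft (gen θ j)) :=
      D.jj ▸ hI.skewCommute_gen j j
    have hkk : SkewCommute (-1 : ℂ) (hI.quotRight (gen θ k)) (hI.quotLeft (gen θ k)) :=
      D.kk ▸ hI.skewCommute_gen k k
    have hsq : hI.quotLeft (gen θ j) * hI.quotLeft (gen θ j) = 0 := by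
      rw [← map_mul, hI.quotLeft_eq_zero (D.gen_sq_mem hI hAAH hGK)]
    have hjkk := hI.skewCommute_quotRight (D.brk_gen_sq_mem hI hAAH hGK)
    rw [qf_add_right, qf_δ, ← sq, map_mul] at hjkk
    unfold IsPreNicholsIdeal.Prim
    simpa [map_xw_cons, hI.quotΔ_gen] using
      hjk.sq_skewBracket_add_add hkj D.jk hjj hkk hsq hjkk
  · simp [Finset.sum_add_distrib, sum_δ]
  · simp only [degW_cons, degW_nil, qf_add_left, qf_add_right, qf_δ, qf_zero_left, qf_zero_right]
    grind [D.jj, D.kk, D.jk]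
  · simp only [degW_cons, degW_nil, qf_add_left, qf_add_right, qf_δ, qf_zero_left, qf_zero_right]
    grind [D.cube, D.ij, D.ik, D.sq_ne_one]

theorem xwBrk_ij_mem (D : SubDiagram q i j k ζ) (hI : IsPreNicholsIdeal S I) (hAAH : AAH)
    (hGK : FinGK I) : xwBrk q [i, i, j] [i, j] ∈ I := by
  refine hI.mem_of_prim hAAH hGK (xwBrk_mem_homogD q _ _) ?_ ?_ ?_ i ?_
  · have hii := D.gen_cube_mem hI hAAH hGK
    have hjj := D.gen_sq_mem hI hAAH hGK
    unfold IsPreNicholsIdeal.Prim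
    rw [D.map_xwBrk_ij, D.map_xwBrk_ij, D.map_xwBrk_ij, hI.quotΔ_gen, hI.quotΔ_gen]
    exact quinticBracket_add_add D.cube D.ij (D.ii ▸ hI.skewCommute_gen i i)
      (hI.skewCommute_gen i j) (hI.skewCommute_gen j i) (D.jj ▸ hI.skewCommute_gen j j)
      (by simp only [← map_mul, hI.quotLeft_eq_zero hii])
      (by simp only [← map_mul, hI.quotRight_eq_zero hii])
      (by simp only [← map_mul, hI.quotLeft_eq_zero hjj])
      (by simp only [← map_mul, hI.quotRight_eq_zero hjj])
  · simp [Finset.sum_add_distrib, sum_δ]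
  · simp only [List.cons_append, List.nil_append, degW_cons, degW_nil, qf_add_left, qf_add_right,
      qf_δ, qf_zero_left, qf_zero_right]
    grind [D.cube, D.ii, D.jj, D.ij]
  · simp only [List.cons_append, List.nil_append, degW_cons, degW_nil, qf_add_left, qf_add_right,
      qf_δ, qf_zero_left, qf_zero_right]
    grind [D.cube, D.ii, D.ij, D.sq_ne_one]

theorem skewCommute_k_i (D : SubDiagram q i j k ζ) (hI : IsPreNicholsIdeal S I) (hAAH : AAH)
    (hGK : FinGK I) :
    SkewCommute (q k i : ℂ) (hI.quotRight (gen θ k)) (hI.quotRight (gen θ i)) := by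
  have hik := hI.skewCommute_quotRight (D.brk_gen_mem hI hAAH hGK)
  rw [qf_δ] at hik
  exact hik.symm D.ik

theorem skewCommute_k_jk (D : SubDiagram q i j k ζ) (hI : IsPreNicholsIdeal S I) (hAAH : AAH)
    (hGK : FinGK I) :
    SkewCommute (q k j : ℂ) (hI.quotRight (gen θ k)) (hI.quotRight (xw q [j, k])) := by
  have hjkk := hI.skewCommute_quotRight (D.brk_gen_sq_mem hI hAAH hGK)
  rw [qf_add_right, qf_δ, ← sq, map_mul] at hjkk
  simpa [map_xw_cons] using hjkk.skewBracket_of_sq D.jk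

theorem skewCommute_k_ijk (D : SubDiagram q i j k ζ) (hI : IsPreNicholsIdeal S I) (hAAH : AAH)
    (hGK : FinGK I) :
    SkewCommute (q k i * q k j : ℂ) (hI.quotRight (gen θ k)) (hI.quotRight (xw q [i, j, k])) := by
  rw [map_xw_cons]
  exact (D.skewCommute_k_i hI hAAH hGK).skewBracket_right (D.skewCommute_k_jk hI hAAH hGK)

theorem skewCommute_k_iijk (D : SubDiagram q i j k ζ) (hI : IsPreNicholsIdeal S I) (hAAH : AAH)
    (hGK : FinGK I) : SkewCommute (q k i * q k j * q k i : ℂ) (hI.quotRight (gen θ k))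
      (hI.quotRight (xw q [i, i, j, k])) := by
  rw [map_xw_cons, mul_comm]
  exact (D.skewCommute_k_i hI hAAH hGK).skewBracket_right (D.skewCommute_k_ijk hI hAAH hGK)

theorem quotLeft_ijk (D : SubDiagram q i j k ζ) (hI : IsPreNicholsIdeal S I) (hAAH : AAH)
    (hGK : FinGK I) : hI.quotLeft (xw q [i, j, k]) =
      skewBracket (q j k * q i k : ℂ) (hI.quotLeft (xw q [i, j])) (hI.quotLeft (gen θ k)) := by
  have hik := hI.skewCommute_quotLeft (D.brk_gen_mem hI hAAH hGK)
  rw [qf_δ] at hik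
  simpa [map_xw_cons] using skewBracket_skewBracket hik

theorem quotLeft_iijk (D : SubDiagram q i j k ζ) (hI : IsPreNicholsIdeal S I) (hAAH : AAH)
    (hGK : FinGK I) : hI.quotLeft (xw q [i, i, j, k]) =
      skewBracket (q j k * q i k * q i k : ℂ) (hI.quotLeft (xw q [i, i, j]))
        (hI.quotLeft (gen θ k)) := by
  have hik := hI.skewCommute_quotLeft (D.brk_gen_mem hI hAAH hGK)
  rw [qf_δ] at hik
  rw [map_xw_cons, D.quotLeft_ijk hI hAAH hGK, map_xw_cons _ i i, ← skewBracket_skewBracket hik]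
  simp [mul_assoc]

theorem quotΔ_jk (D : SubDiagram q i j k ζ) (hI : IsPreNicholsIdeal S I) :
    hI.quotΔ (xw q [j, k]) = hI.quotLeft (xw q [j, k]) + hI.quotRight (xw q [j, k]) +
      (2 : ℂ) • (hI.quotLeft (gen θ j) * hI.quotRight (gen θ k)) := by
  simpa [map_xw_cons, hI.quotΔ_gen] using
    (hI.skewCommute_gen j k).skewBracket_add_add_of_mul_eq_neg_one (hI.skewCommute_gen k j) D.jk

theorem quotΔ_ijk (D : SubDiagram q i j k ζ) (hI : IsPreNicholsIdeal S I) (hAAH : AAH)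
    (hGK : FinGK I) : hI.quotΔ (xw q [i, j, k]) =
      skewBracket (q i j * q i k : ℂ) (hI.quotLeft (gen θ i) + hI.quotRight (gen θ i))
          (hI.quotLeft (xw q [j, k]) + hI.quotRight (xw q [j, k])) +
        (2 : ℂ) • (hI.quotLeft (xw q [i, j]) * hI.quotRight (gen θ k)) := by
  have hik := hI.skewCommute_quotRight (D.brk_gen_mem hI hAAH hGK)
  rw [qf_δ] at hik
  have h := (hI.skewCommute_gen i j).skewBracket_add_mul (hI.skewCommute_gen k i) hik D.ik
  rw [map_xw_cons, D.quotΔ_jk hI, hI.quotΔ_gen, skewBracket_add_right, skewBracket_smul_right]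
  simpa [map_xw_cons] using h

theorem quotΔ_iijk (D : SubDiagram q i j k ζ) (hI : IsPreNicholsIdeal S I) (hAAH : AAH)
    (hGK : FinGK I) : hI.quotΔ (xw q [i, i, j, k]) =
      skewBracket (ζ * (q i j * q i k) : ℂ) (hI.quotLeft (gen θ i) + hI.quotRight (gen θ i))
          (skewBracket (q i j * q i k : ℂ) (hI.quotLeft (gen θ i) + hI.quotRight (gen θ i))
            (hI.quotLeft (xw q [j, k]) + hI.quotRight (xw q [j, k]))) +
        (2 : ℂ) • (hI.quotLeft (xw q [i, i, j]) * hI.quotRight (gen θ k)) := by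
  have hik := hI.skewCommute_quotRight (D.brk_gen_mem hI hAAH hGK)
  rw [qf_δ] at hik
  have h := (hI.skewCommute_xw [i] [i, j] rfl).skewBracket_add_mul (hI.skewCommute_gen k i) hik D.ik
  rw [map_xw_cons, D.quotΔ_ijk hI hAAH hGK, hI.quotΔ_gen, skewBracket_add_right,
    skewBracket_smul_right]
  simpa [map_xw_cons, D.ii, mul_assoc] using h

theorem skewCommute_iij_ij (D : SubDiagram q i j k ζ) (hI : IsPreNicholsIdeal S I) (hAAH : AAH)
    (hGK : FinGK I) :
    SkewCommute (q i j : ℂ) (hI.quotLeft (xw q [i, i, j])) (hI.quotLeft (xw q [i, j])) := by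
  have h := hI.quotLeft_eq_zero (D.xwBrk_ij_mem hI hAAH hGK)
  rw [D.map_xwBrk_ij, quinticBracket, skewBracket_eq_zero] at h
  simpa [map_xw_cons, D.ii] using h

theorem skewBracket_i_ij (D : SubDiagram q i j k ζ) (hI : IsPreNicholsIdeal S I) :
    skewBracket (ζ * q i j : ℂ) (hI.quotLeft (gen θ i)) (hI.quotLeft (xw q [i, j])) =
      hI.quotLeft (xw q [i, i, j]) := by
  simp [map_xw_cons, D.ii]

theorem skewCommute_i_iij (D : SubDiagram q i j k ζ) (hI : IsPreNicholsIdeal S I) (hAAH : AAH)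
    (hGK : FinGK I) : SkewCommute (ζ ^ 2 * q i j : ℂ) (hI.quotLeft (gen θ i))
      (hI.quotLeft (xw q [i, i, j])) := by
  have hcube := hI.quotLeft_eq_zero (D.gen_cube_mem hI hAAH hGK)
  rw [map_mul, map_mul] at hcube
  simpa [map_xw_cons, D.ii] using
    skewCommute_skewBracket_skewBracket (p := (q i j : ℂ)) D.cube hcube

theorem cross_left (D : SubDiagram q i j k ζ) (hI : IsPreNicholsIdeal S I) (hAAH : AAH)
    (hGK : FinGK I) :
    skewBracket (q i j * q i k : ℂ) (hI.quotLeft (xw q [i, i, j, k]))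
        (hI.quotLeft (xw q [i, j]) * hI.quotRight (gen θ k)) +
      skewBracket (q i j * q i k : ℂ) (hI.quotLeft (xw q [i, i, j]) * hI.quotRight (gen θ k))
        (hI.quotLeft (xw q [i, j, k])) = 0 := by
  have hmix := (D.skewCommute_iij_ij hI hAAH hGK).mixed_relation
    (l := (q k i * q k j : ℂ)) (t := (q j k : ℂ))
    (r := (q i k : ℂ)) (e := hI.quotLeft (gen θ k))
    (by grind [D.ik, D.jk])
  rw [← D.quotLeft_ijk hI hAAH hGK, ← D.quotLeft_iijk hI hAAH hGK] at hmix
  refine cross_term_left (r' := (q k i : ℂ)) D.ik ?_ ?_ hmix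
  all_goals
    rw [← xw_singleton (q := q) k]
    refine hI.skewCommute_xw _ _ ?_
    simp only [degW_cons, degW_nil, qf_add_left, qf_add_right, qf_δ, qf_zero_left, qf_zero_right,
      D.kk]
    ring

theorem cross_iijk (D : SubDiagram q i j k ζ) (hI : IsPreNicholsIdeal S I) (hAAH : AAH)
    (hGK : FinGK I) : SkewCommute (q i j * q i k : ℂ) (hI.quotRight (xw q [i, i, j, k]))
      (hI.quotLeft (xw q [i, j]) * hI.quotRight (gen θ k)) := by
  refine cross_term_right₂ D.ik (D.skewCommute_k_iijk hI hAAH hGK) (hI.skewCommute_xw _ _ ?_)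
  simp only [degW_cons, degW_nil, qf_add_left, qf_add_right, qf_δ, qf_zero_left, qf_zero_right]
  grind [D.cube, D.ii, D.jj, D.kk, D.ij, D.ik, D.jk]

theorem cross_ijk (D : SubDiagram q i j k ζ) (hI : IsPreNicholsIdeal S I) (hAAH : AAH)
    (hGK : FinGK I) :
    skewBracket (q i j * q i k : ℂ) (hI.quotLeft (gen θ i) * hI.quotRight (xw q [i, j, k]))
        (hI.quotLeft (xw q [i, j]) * hI.quotRight (gen θ k)) +
      skewBracket (q i j * q i k : ℂ) (hI.quotLeft (xw q [i, i, j]) * hI.quotRight (gen θ k))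
        (hI.quotRight (xw q [i, j, k])) = 0 := by
  refine cross_term_right₁ D.cube D.ij D.ik (hI.skewCommute_gen k i)
    (D.skewCommute_k_ijk hI hAAH hGK) (hI.skewCommute_xw _ _ ?_) (hI.skewCommute_xw _ _ ?_)
    (D.skewBracket_i_ij hI)
  all_goals
    simp only [degW_cons, degW_nil, qf_add_left, qf_add_right, qf_δ, qf_zero_left, qf_zero_right]
    grind [D.cube, D.ii, D.jj, D.ij]

theorem cross_jk (D : SubDiagram q i j k ζ) (hI : IsPreNicholsIdeal S I) (hAAH : AAH)
    (hGK : FinGK I) :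
    skewBracket (q i j * q i k : ℂ)
        (hI.quotLeft (gen θ i) * (hI.quotLeft (gen θ i) * hI.quotRight (xw q [j, k])))
        (hI.quotLeft (xw q [i, j]) * hI.quotRight (gen θ k)) +
      (1 + ζ) • skewBracket (q i j * q i k : ℂ)
        (hI.quotLeft (xw q [i, i, j]) * hI.quotRight (gen θ k))
        (hI.quotLeft (gen θ i) * hI.quotRight (xw q [j, k])) = 0 := by
  refine cross_term_right₀ D.cube D.ij D.ik (hI.skewCommute_gen k i)
    (D.skewCommute_k_jk hI hAAH hGK) (hI.skewCommute_xw _ _ ?_) (hI.skewCommute_xw _ _ ?_)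
    (D.skewBracket_i_ij hI) (D.skewCommute_i_iij hI hAAH hGK)
  all_goals
    simp only [degW_cons, degW_nil, qf_add_left, qf_add_right, qf_δ, qf_zero_left, qf_zero_right]
    grind [D.jj]

theorem cross_mul (D : SubDiagram q i j k ζ) (hI : IsPreNicholsIdeal S I) (hAAH : AAH)
    (hGK : FinGK I) : SkewCommute (q i j * q i k : ℂ)
      (hI.quotLeft (xw q [i, i, j]) * hI.quotRight (gen θ k))
      (hI.quotLeft (xw q [i, j]) * hI.quotRight (gen θ k)) := by
  refine cross_term_mul_mul (r' := (q k i : ℂ)) (l := (q k i * q k j : ℂ))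
    (D.skewCommute_iij_ij hI hAAH hGK) ?_ ?_ D.ik
  all_goals
    rw [← xw_singleton (q := q) k]
    refine hI.skewCommute_xw _ _ ?_
    simp only [degW_cons, degW_nil, qf_add_left, qf_add_right, qf_δ, qf_zero_left, qf_zero_right]
    ring

theorem ij_mul_ik (D : SubDiagram q i j k ζ) : (q i j * q i k : ℂ) * (q j i * q k i) = -ζ := by
  linear_combination q i k * q k i * D.ij - ζ * D.ik

theorem skewCommute_i_jk (hI : IsPreNicholsIdeal S I) (i j k : Fin θ) :
    SkewCommute (q i j * q i k : ℂ) (hI.quotRight (gen θ i)) (hI.quotLeft (xw q [j, k])) := by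
  simpa using hI.skewCommute_xw (q := q) [i] [j, k] rfl

theorem skewCommute_jk_i (hI : IsPreNicholsIdeal S I) (i j k : Fin θ) :
    SkewCommute (q j i * q k i : ℂ) (hI.quotRight (xw q [j, k])) (hI.quotLeft (gen θ i)) := by
  simpa using hI.skewCommute_xw (q := q) [j, k] [i] rfl

theorem skewBracket_add_jk (D : SubDiagram q i j k ζ) (hI : IsPreNicholsIdeal S I) :
    skewBracket (q i j * q i k : ℂ) (hI.quotLeft (gen θ i) + hI.quotRight (gen θ i))
        (hI.quotLeft (xw q [j, k]) + hI.quotRight (xw q [j, k])) =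
      hI.quotLeft (xw q [i, j, k]) + hI.quotRight (xw q [i, j, k]) +
        (1 + ζ) • (hI.quotLeft (gen θ i) * hI.quotRight (xw q [j, k])) := by
  simpa [map_xw_cons] using (skewCommute_i_jk hI i j k).skewBracket_add_add_of_mul_eq_neg
    (skewCommute_jk_i hI i j k) D.ij_mul_ik

theorem skewBracket_skewBracket_add_jk (D : SubDiagram q i j k ζ) (hI : IsPreNicholsIdeal S I) :
    skewBracket (ζ * (q i j * q i k) : ℂ) (hI.quotLeft (gen θ i) + hI.quotRight (gen θ i))
        (skewBracket (q i j * q i k : ℂ) (hI.quotLeft (gen θ i) + hI.quotRight (gen θ i))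
          (hI.quotLeft (xw q [j, k]) + hI.quotRight (xw q [j, k]))) =
      hI.quotLeft (xw q [i, i, j, k]) + hI.quotRight (xw q [i, i, j, k]) +
        hI.quotLeft (gen θ i) * hI.quotRight (xw q [i, j, k]) +
        hI.quotLeft (gen θ i) * (hI.quotLeft (gen θ i) * hI.quotRight (xw q [j, k])) := by
  simpa [map_xw_cons, D.ii] using (skewCommute_i_jk hI i j k).skewBracket_skewBracket_add_add
    (skewCommute_jk_i hI i j k) (D.ii ▸ hI.skewCommute_gen i i) D.ij_mul_ik D.cube

theorem quinticBracket_add_jk (D : SubDiagram q i j k ζ) (hI : IsPreNicholsIdeal S I)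
    (hAAH : AAH) (hGK : FinGK I) :
    quinticBracket ζ (q i j * q i k : ℂ) (hI.quotLeft (gen θ i) + hI.quotRight (gen θ i))
        (hI.quotLeft (xw q [j, k]) + hI.quotRight (xw q [j, k])) =
      quinticBracket ζ (q i j * q i k : ℂ) (hI.quotLeft (gen θ i)) (hI.quotLeft (xw q [j, k])) +
        quinticBracket ζ (q i j * q i k : ℂ) (hI.quotRight (gen θ i))
          (hI.quotRight (xw q [j, k])) := by
  have hcube := D.gen_cube_mem hI hAAH hGK
  have hsq := D.xw_jk_sq_mem hI hAAH hGK
  have hjk_jk : SkewCommute (-1 : ℂ) (hI.quotRight (xw q [j, k])) (hI.quotLeft (xw q [j, k])) := by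
    refine hI.skewCommute_xw _ _ ?_
    simp only [degW_cons, degW_nil, qf_add_left, qf_add_right, qf_δ, qf_zero_left, qf_zero_right]
    grind [D.jj, D.kk, D.jk]
  exact quinticBracket_add_add D.cube D.ij_mul_ik (D.ii ▸ hI.skewCommute_gen i i)
    (skewCommute_i_jk hI i j k) (skewCommute_jk_i hI i j k) hjk_jk
    (by simp only [← map_mul, hI.quotLeft_eq_zero hcube])
    (by simp only [← map_mul, hI.quotRight_eq_zero hcube])
    (by rw [← map_mul, hI.quotLeft_eq_zero hsq])
    (by rw [← map_mul, hI.quotRight_eq_zero hsq])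

theorem cross_terms (D : SubDiagram q i j k ζ) (hI : IsPreNicholsIdeal S I) (hAAH : AAH)
    (hGK : FinGK I) :
    skewBracket (q i j * q i k : ℂ)
        (skewBracket (ζ * (q i j * q i k) : ℂ) (hI.quotLeft (gen θ i) + hI.quotRight (gen θ i))
          (skewBracket (q i j * q i k : ℂ) (hI.quotLeft (gen θ i) + hI.quotRight (gen θ i))
            (hI.quotLeft (xw q [j, k]) + hI.quotRight (xw q [j, k]))))
        (hI.quotLeft (xw q [i, j]) * hI.quotRight (gen θ k)) +
      skewBracket (q i j * q i k : ℂ) (hI.quotLeft (xw q [i, i, j]) * hI.quotRight (gen θ k))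
        (skewBracket (q i j * q i k : ℂ) (hI.quotLeft (gen θ i) + hI.quotRight (gen θ i))
          (hI.quotLeft (xw q [j, k]) + hI.quotRight (xw q [j, k]))) = 0 := by
  have hd₂ := skewBracket_eq_zero.2 (D.cross_iijk hI hAAH hGK)
  rw [D.skewBracket_skewBracket_add_jk hI, D.skewBracket_add_jk hI]
  simp only [skewBracket_add_left, skewBracket_add_right, skewBracket_smul_right, hd₂]
  linear_combination (norm := module)
    D.cross_left hI hAAH hGK + D.cross_ijk hI hAAH hGK + D.cross_jk hI hAAH hGK

theorem prim_xwBrk_ijk (D : SubDiagram q i j k ζ) (hI : IsPreNicholsIdeal S I) (hAAH : AAH)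
    (hGK : FinGK I) : hI.Prim (xwBrk q [i, i, j, k] [i, j, k]) := by
  rw [IsPreNicholsIdeal.Prim, D.map_xwBrk_ijk hI.quotLeft, D.map_xwBrk_ijk hI.quotRight,
    ← D.quinticBracket_add_jk hI hAAH hGK, map_xwBrk, D.qf_iijk_ijk, D.quotΔ_iijk hI hAAH hGK,
    D.quotΔ_ijk hI hAAH hGK]
  exact skewBracket_add_smul_add_smul 2 (D.cross_terms hI hAAH hGK) (D.cross_mul hI hAAH hGK)

theorem xwBrk_ijk_mem (D : SubDiagram q i j k ζ) (hI : IsPreNicholsIdeal S I) (hAAH : AAH)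
    (hGK : FinGK I) : xwBrk q [i, i, j, k] [i, j, k] ∈ I := by
  refine hI.mem_of_prim hAAH hGK (xwBrk_mem_homogD q _ _) (D.prim_xwBrk_ijk hI hAAH hGK) ?_ ?_ i ?_
  · simp [Finset.sum_add_distrib, sum_δ]
  all_goals
    simp only [List.cons_append, List.nil_append, degW_cons, degW_nil, qf_add_left, qf_add_right,
      qf_δ, qf_zero_left, qf_zero_right]
    grind [D.cube, D.ii, D.jj, D.kk, D.ij, D.ik, D.jk, D.sq_ne_one]

end SubDiagram

end MainRelation

theorem statement_13_general (θ : ℕ) (q : Fin θ → Fin θ → ℂˣ) (S : BraidedStr θ q) (hAAH : AAH)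
    (I : Submodule ℂ (TV θ)) (hI : IsPreNicholsIdeal S I) (hGK : FinGK I) (i j k : Fin θ)
    (h1 : (q j j : ℂ) = -1) (h2 : (q k k : ℂ) = -1) (h3 : qtil q j k = -1)
    (h4 : (q i i : ℂ) = -(qtil q i j)) (h5 : IsPrimitiveRoot (q i i : ℂ) 3)
    (h6 : qtil q i k = 1) :
    brk q (δ θ i + δ θ i + δ θ j + δ θ k) (δ θ i + δ θ j + δ θ k)
      (xw q [i, i, j, k]) (xw q [i, j, k]) ∈ I := by
  have hζ : (q i i : ℂ) ^ 2 + q i i + 1 = 0 := by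
    refine (mul_eq_zero.1 ?_).resolve_left (sub_ne_zero.2 (h5.ne_one (by norm_num)))
    linear_combination h5.pow_eq_one
  have D : SubDiagram q i j k (q i i) := ⟨hζ, rfl, h1, h2, by rw [h4, neg_neg, qtil], h6, h3⟩
  simpa [xwBrk, degW_cons, add_assoc] using D.xwBrk_ijk_mem hI hAAH hGK

/-- Lemma 3.9: if `q_{jj} = q_{kk} = q̃_{jk} = -1`,
`q_{ii} = -q̃_{ij} ∈ G₃'` and `q̃_{ik} = 1`, then `[x_{iijk},x_{ijk}]_c = 0`
in every finite-GKdim pre-Nichols algebra of `q`. -/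
theorem statement_13 (θ : ℕ) (q : Fin θ → Fin θ → ℂˣ) (S : BraidedStr θ q)
    (hconn : (dynkin q).Connected)
    (hfd : FiniteDimensional ℂ (TV θ ⧸ Jq S))
    (hAAH : AAH)
    (I : Submodule ℂ (TV θ)) (hI : IsPreNicholsIdeal S I) (hGK : FinGK I)
    (i j k : Fin θ) (hij : i ≠ j) (hik : i ≠ k) (hjk : j ≠ k)
    (h1 : (q j j : ℂ) = -1) (h2 : (q k k : ℂ) = -1) (h3 : qtil q j k = -1)
    (h4 : (q i i : ℂ) = -(qtil q i j)) (h5 : IsPrimitiveRoot (q i i : ℂ) 3)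
    (h6 : qtil q i k = 1) :
    brk q (δ θ i + δ θ i + δ θ j + δ θ k) (δ θ i + δ θ j + δ θ k)
      (xw q [i, i, j, k]) (xw q [i, j, k]) ∈ I :=
  statement_13_general θ q S hAAH I hI hGK i j k h1 h2 h3 h4 h5 h6

end PreNicholsPaper
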